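/- arXiv:1801.01605 — 4 statements merged into one kernel-verified Lean document; each statement's English description precedes it below -/
import Mathlib

section
/- There exists an absolute constant C > 0 such that for all integers a ≥ 0, d ≥ 1, N ≥ 1 satisfying max(N·d, N²) ≤ a ≤ N²·d/1800, one has δ ≤ C · a^{1/4} · d^{1/2} / N^{1/2}; that is, there exist an integer n with 0 ≤ n ≤ N and an integer m with |a + n·d − m²| ≤ C · a^{1/4} · d^{1/2} / N^{1/2}. -/
/-!
Let `m` be an integer and `b / q` a fraction in lowest terms close to `2 * m / d`, and write
`q * ((m + h) ^ 2 - a) = q * h ^ 2 + (2 * m * q - b * d) * h + d * b * h - q * (a - m ^ 2)`.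
Restricting `h` to a suitable residue class modulo `q` makes `d * b * h - q * (a - m ^ 2)` congruent
to a constant `-ρ` with `0 ≤ ρ < d` modulo `q * d`, so `(m + h) ^ 2` is close to the progression as
soon as `q * h ^ 2 + (2 * m * q - b * d) * h` is close to `ρ`. In that class some `h` exceeds the
nonnegative root of `q * x ^ 2 + (2 * m * q - b * d) * x = ρ` by at most `q`, which gives a
distance of at most `|2 * m * q - b * d| + 2 * √(q * d) + q ^ 2`.

The squares of the integers in an interval of radius `L ≍ N * d / √a` lie in the range of the
progression. When `L ^ (3 / 2) ≤ d`, take `m` at the centre of the interval and `b / q` from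
Dirichlet's theorem with `q ≤ √L`. Otherwise take `b / q` with `q ≤ d / L` and use the freedom to
move `m` inside the interval to the integer nearest to `b * d / (2 * q)`.
Both choices give the distance `O(d / √L)`.
-/

/-- The inequality `δ_{a,d,N} ≤ B`: some term of the progression `a, a + d, …, a + N * d` is within
`B` of a perfect square. The minimum `δ` itself is not formed, as only upper bounds are needed. -/
def SquareNearAP (a d N : ℤ) (B : ℝ) : Prop :=
  ∃ n m : ℤ, 0 ≤ n ∧ n ≤ N ∧ |((a + n * d - m ^ 2 : ℤ) : ℝ)| ≤ B

lemma SquareNearAP.mono {a d N : ℤ} {B B' : ℝ} (h : SquareNearAP a d N B) (hB : B ≤ B') :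
    SquareNearAP a d N B' := by
  obtain ⟨n, m, hn0, hnN, hnm⟩ := h
  exact ⟨n, m, hn0, hnN, hnm.trans hB⟩

lemma squareNearAP_of_sq_mem_Icc {a d N n m : ℤ} (hd : 0 < d) (hm : m ^ 2 ∈ Set.Icc a (a + N * d))
    (hn : a + n * d ≤ m ^ 2) : SquareNearAP a d N (m ^ 2 - (a + n * d)) := by
  obtain ⟨ham, hmN⟩ := hm
  have hnN : n ≤ N := le_of_mul_le_mul_right (by linarith) hd
  have hN : 0 ≤ N := nonneg_of_mul_nonneg_left (by linarith) hd
  have of_int {n' : ℤ} (h0 : 0 ≤ n') (hN' : n' ≤ N)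
      (h : |a + n' * d - m ^ 2| ≤ m ^ 2 - (a + n * d)) :
      SquareNearAP a d N (m ^ 2 - (a + n * d)) := ⟨n', m, h0, hN', by exact_mod_cast h⟩
  rcases le_total 0 n with hn0 | hn0
  · exact of_int hn0 hnN (by rw [abs_of_nonpos] <;> linarith)
  · have : n * d ≤ 0 := mul_nonpos_of_nonpos_of_nonneg hn0 hd.le
    exact of_int le_rfl hN (by rw [abs_of_nonpos] <;> linarith)

lemma exists_nonneg_quadratic_eq {q ρ : ℝ} (e : ℝ) (hq : 0 < q) (hρ : 0 ≤ ρ) :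
    ∃ x, 0 ≤ x ∧ q * x ^ 2 + e * x = ρ := by
  have hdisc : √(e ^ 2 + 4 * q * ρ) ^ 2 = e ^ 2 + 4 * q * ρ := Real.sq_sqrt (by positivity)
  have he_le : e ≤ √(e ^ 2 + 4 * q * ρ) :=
    Real.le_sqrt_of_sq_le (le_add_of_nonneg_right (by positivity))
  refine ⟨(√(e ^ 2 + 4 * q * ρ) - e) / (2 * q), div_nonneg (sub_nonneg.2 he_le) (by positivity), ?_⟩
  field_simp
  ring_nf at hdisc ⊢
  linear_combination hdisc

lemma exists_modEq_quadratic_sub_le {q e ρ : ℤ} (c : ℤ) (hq : 0 < q) (he : 0 ≤ e) (hρ : 0 ≤ ρ) :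
    ∃ h : ℤ, h ≡ c [ZMOD q] ∧ 0 ≤ h ∧ (h : ℝ) ≤ √(ρ / q) + q ∧ ρ ≤ q * h ^ 2 + e * h ∧
      (q * h ^ 2 + e * h - ρ : ℝ) ≤ q * (e + 2 * √(q * ρ) + q ^ 2) := by
  have hqR : (0 : ℝ) < q := by exact_mod_cast hq
  have heR : (0 : ℝ) ≤ e := by exact_mod_cast he
  obtain ⟨x, hx0, hx⟩ := exists_nonneg_quadratic_eq (e : ℝ) hqR (Int.cast_nonneg hρ)
  obtain ⟨k, ⟨hxk, hkx⟩, -⟩ := existsUnique_add_zsmul_mem_Ico hqR (c : ℝ) x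
  set h : ℤ := c + k * q with hh
  have hhR : (c : ℝ) + k • (q : ℝ) = h := by rw [hh]; push_cast; rw [zsmul_eq_mul]
  rw [hhR] at hxk hkx
  have hh0 : (0 : ℝ) ≤ h := hx0.trans hxk
  have hqx : q * x ^ 2 ≤ ρ := by linarith [mul_nonneg heR hx0]
  have hx_le : x ≤ √(ρ / q) := Real.le_sqrt_of_sq_le <| by
    rw [le_div_iff₀ hqR]; linarith
  have hqx_le : q * x ≤ √(q * ρ) := Real.le_sqrt_of_sq_le <| by
    calc (q * x : ℝ) ^ 2 = q * (q * x ^ 2) := by ring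
      _ ≤ (q * ρ : ℝ) := by gcongr
  refine ⟨h, by simp [hh, Int.ModEq], by exact_mod_cast hh0, by linarith, ?_, ?_⟩
  · have : (ρ : ℝ) ≤ q * h ^ 2 + e * h := by rw [← hx]; gcongr
    exact_mod_cast this
  · calc (q * h ^ 2 + e * h - ρ : ℝ) ≤ q * (x + q) ^ 2 + e * (x + q) - ρ := by gcongr
      _ = q * (e + 2 * (q * x) + q ^ 2) := by linear_combination hx
      _ ≤ q * (e + 2 * √(q * ρ) + q ^ 2) := by gcongr

lemma exists_class_sq_sub_AP_eq {d q b : ℤ} (a m : ℤ) (hd : 0 < d) (hbq : IsCoprime b q) :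
    ∃ c ρ : ℤ, 0 ≤ ρ ∧ ρ < d ∧ ∀ h : ℤ, h ≡ c [ZMOD q] → ∃ n : ℤ,
      q * ((m + h) ^ 2 - (a + n * d)) = q * h ^ 2 + (2 * m * q - b * d) * h - ρ := by
  obtain ⟨u, v, huv⟩ := hbq
  have hdivmod := Int.emod_add_mul_ediv (q * (a - m ^ 2)) d
  set ρ := q * (a - m ^ 2) % d
  set t := q * (a - m ^ 2) / d
  refine ⟨u * t, ρ, Int.emod_nonneg _ hd.ne', Int.emod_lt_of_pos _ hd, fun h hh => ?_⟩
  obtain ⟨k, hk⟩ := hh.symm.dvd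
  have hbh : b * h = t + q * (b * k - v * t) := by linear_combination b * hk + t * huv
  exact ⟨b * k - v * t, by linear_combination d * hbh + hdivmod⟩

lemma exists_sq_sub_AP_le_of_nonneg {d q b m : ℤ} (a : ℤ) (hd : 0 < d) (hq : 0 < q)
    (hbq : IsCoprime b q) (hb : 0 ≤ 2 * m * q - b * d) :
    ∃ h n : ℤ, 0 ≤ h ∧ (h : ℝ) ≤ √(d / q) + q ∧ a + n * d ≤ (m + h) ^ 2 ∧
      (((m + h) ^ 2 - (a + n * d) : ℤ) : ℝ) ≤
        ((2 * m * q - b * d : ℤ) : ℝ) + 2 * √(q * d) + q ^ 2 := by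
  obtain ⟨c, ρ, hρ0, hρd, hclass⟩ := exists_class_sq_sub_AP_eq a m hd hbq
  obtain ⟨h, hhc, hh0, hh_le, hlo, hhi⟩ := exists_modEq_quadratic_sub_le c hq hb hρ0
  obtain ⟨n, hn⟩ := hclass h hhc
  have hqR : (0 : ℝ) < q := by exact_mod_cast hq
  have hρdR : (ρ : ℝ) ≤ d := by exact_mod_cast hρd.le
  refine ⟨h, n, hh0, hh_le.trans (by gcongr), ?_, ?_⟩
  · exact sub_nonneg.1 <| nonneg_of_mul_nonneg_right (by linarith) hq
  · refine le_of_mul_le_mul_left (le_trans ?_ (hhi.trans ?_)) hqR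
    · exact_mod_cast hn.le
    · gcongr

lemma exists_sq_sub_AP_le {d q b : ℤ} (a m : ℤ) (hd : 0 < d) (hq : 0 < q)
    (hbq : IsCoprime b q) :
    ∃ m' n : ℤ, |(m' - m : ℝ)| ≤ √(d / q) + q ∧ a + n * d ≤ m' ^ 2 ∧
      (m' ^ 2 - (a + n * d) : ℝ) ≤ |(2 * m * q - b * d : ℝ)| + 2 * √(q * d) + q ^ 2 := by
  rcases le_total 0 (2 * m * q - b * d) with hb | hb
  · obtain ⟨h, n, hh0, hh_le, hlo, hhi⟩ := exists_sq_sub_AP_le_of_nonneg a hd hq hbq hb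
    refine ⟨m + h, n, ?_, hlo, ?_⟩
    · push_cast
      rwa [add_sub_cancel_left, abs_of_nonneg (by exact_mod_cast hh0)]
    · push_cast at hhi ⊢
      exact hhi.trans (by gcongr; exact le_abs_self _)
  · -- `(m - h) ^ 2 = (-m + h) ^ 2`, and `-b / q` approximates `2 * (-m) / d`.
    obtain ⟨h, n, hh0, hh_le, hlo, hhi⟩ :=
      exists_sq_sub_AP_le_of_nonneg (m := -m) a hd hq hbq.neg_left (by linarith)
    refine ⟨m - h, n, ?_, by linarith, ?_⟩
    · push_cast
      rwa [sub_sub_cancel_left, abs_neg, abs_of_nonneg (by exact_mod_cast hh0)]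
    · push_cast at hhi ⊢
      linarith [neg_le_abs (2 * m * q - b * d : ℝ)]

lemma exists_coprime_abs_mul_sub_le (ξ : ℝ) {Q : ℝ} (hQ : 1 ≤ Q) :
    ∃ b q : ℤ, 0 < q ∧ (q : ℝ) ≤ Q ∧ IsCoprime b q ∧ |ξ * q - b| ≤ 1 / Q := by
  obtain ⟨r, hr, hrQ⟩ := Real.exists_rat_abs_sub_le_and_den_le ξ (Nat.floor_pos.2 hQ)
  have hden : (0 : ℝ) < r.den := by exact_mod_cast r.den_pos
  refine ⟨r.num, r.den, by exact_mod_cast r.den_pos, ?_, r.isCoprime_num_den, ?_⟩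
  · exact_mod_cast (Nat.le_floor_iff (by linarith)).1 hrQ
  · calc |ξ * (r.den : ℤ) - r.num| = |ξ - r| * r.den := by
          have hnum : (r : ℝ) * r.den = r.num := by exact_mod_cast Rat.mul_den_eq_num r
          rw [← hnum, Int.cast_natCast, ← sub_mul, abs_mul, abs_of_pos hden]
      _ ≤ 1 / ((⌊Q⌋₊ + 1) * r.den) * r.den := by gcongr
      _ = 1 / (⌊Q⌋₊ + 1) := by field_simp
      _ ≤ 1 / Q := by gcongr; exact (Nat.lt_floor_add_one Q).le

section Window

variable {a d N : ℤ} {c L : ℝ}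

lemma squareNearAP_of_coprime {q b m : ℤ} (hd : 0 < d)
    (hwin : ∀ m : ℤ, |m - c| ≤ L → m ^ 2 ∈ Set.Icc a (a + N * d))
    (hq : 0 < q) (hbq : IsCoprime b q) (hm : |m - c| + √d + q ≤ L) :
    SquareNearAP a d N (|(2 * m * q - b * d : ℝ)| + 2 * √(q * d) + q ^ 2) := by
  obtain ⟨m', n, hm', hlo, hhi⟩ := exists_sq_sub_AP_le a m hd hq hbq
  have hsqrt : √(d / q : ℝ) ≤ √d :=
    Real.sqrt_le_sqrt (div_le_self (by exact_mod_cast hd.le) (by exact_mod_cast hq))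
  have hm'c : |m' - c| ≤ L := by linarith [abs_sub_le (m' : ℝ) m c]
  exact (squareNearAP_of_sq_mem_Icc hd (hwin m' hm'c) hlo).mono hhi

lemma squareNearAP_of_approx_center {Q : ℝ} (hd : 0 < d)
    (hwin : ∀ m : ℤ, |m - c| ≤ L → m ^ 2 ∈ Set.Icc a (a + N * d))
    (hQ : 1 ≤ Q) (hL : √d + Q + 1 / 2 ≤ L) :
    SquareNearAP a d N (d / Q + 2 * √(Q * d) + Q ^ 2) := by
  have hdR : (0 : ℝ) < d := by exact_mod_cast hd
  obtain ⟨b, q, hq, hqQ, hbq, hb⟩ := exists_coprime_abs_mul_sub_le (2 * round c / d) hQ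
  have hround : |round c - c| ≤ 1 / 2 := by rw [abs_sub_comm]; exact abs_sub_round c
  have herr : |(2 * round c * q - b * d : ℝ)| ≤ d / Q :=
    calc |(2 * round c * q - b * d : ℝ)| = |d * (2 * round c / d * q - b : ℝ)| := by
          congr 1
          field_simp
      _ = d * |(2 * round c / d * q - b : ℝ)| := by rw [abs_mul, abs_of_pos hdR]
      _ ≤ d * (1 / Q) := by gcongr
      _ = d / Q := mul_one_div _ _
  exact (squareNearAP_of_coprime hd hwin hq hbq (by linarith)).mono (by gcongr)

lemma squareNearAP_of_recenter {Q : ℝ} (hd : 0 < d)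
    (hwin : ∀ m : ℤ, |m - c| ≤ L → m ^ 2 ∈ Set.Icc a (a + N * d))
    (hQ : 1 ≤ Q) (hdQ : d / Q ≤ L) (hL : √d + Q + 1 / 2 ≤ L / 2) :
    SquareNearAP a d N (Q + 2 * √(Q * d) + Q ^ 2) := by
  have : (0 : ℝ) < d := by exact_mod_cast hd
  obtain ⟨b, q, hq, hqQ, hbq, hb⟩ := exists_coprime_abs_mul_sub_le (2 * c / d) hQ
  have hqR : (1 : ℝ) ≤ q := by exact_mod_cast hq
  set y : ℝ := b * d / (2 * q) with hy
  have hround : |round y - y| ≤ 1 / 2 := by rw [abs_sub_comm]; exact abs_sub_round y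
  have hyc : |y - c| ≤ L / 2 :=
    calc |y - c| = |d / (2 * q) * (2 * c / d * q - b)| := by
          rw [abs_sub_comm, hy]
          congr 1
          field_simp
      _ = d / (2 * q) * |2 * c / d * q - b| := by rw [abs_mul, abs_of_pos (by positivity)]
      _ ≤ d / (2 * 1) * (1 / Q) := by gcongr
      _ = d / Q / 2 := by ring
      _ ≤ L / 2 := by gcongr
  have herr : |(2 * round y * q - b * d : ℝ)| ≤ Q :=
    calc |(2 * round y * q - b * d : ℝ)| = |2 * q * (round y - y)| := by
          rw [hy]
          congr 1
          field_simp
      _ = 2 * q * |round y - y| := by rw [abs_mul, abs_of_pos (by positivity)]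
      _ ≤ 2 * q * (1 / 2) := by gcongr
      _ ≤ Q := by linarith
  have hm : |round y - c| + √d + q ≤ L := by linarith [abs_sub_le (round y : ℝ) y c]
  exact (squareNearAP_of_coprime hd hwin hq hbq hm).mono (by gcongr)

theorem squareNearAP_of_window (hd : 0 < d)
    (hwin : ∀ m : ℤ, |m - c| ≤ L → m ^ 2 ∈ Set.Icc a (a + N * d))
    (hdL : 4 * √d ≤ L) (hLd : L ≤ d) : SquareNearAP a d N (4 * (d / √L)) := by
  have hdR : (1 : ℝ) ≤ d := by exact_mod_cast hd
  have hsqrt_d : 1 ≤ √(d : ℝ) := Real.one_le_sqrt.2 hdR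
  have hd_sq : √(d : ℝ) ^ 2 = d := Real.sq_sqrt (by linarith)
  have hL_sq : √L ^ 2 = L := Real.sq_sqrt (by linarith)
  set k := √L
  have hk2 : 2 ≤ k := Real.le_sqrt_of_sq_le (by linarith)
  rcases le_total (k ^ 3) d with hkd | hkd
  · have hkL : k ≤ L / 2 := by
      calc k ≤ k * k / 2 := by linarith [mul_le_mul_of_nonneg_left hk2 (by linarith : 0 ≤ k)]
        _ = L / 2 := by rw [← hL_sq, sq]
    refine (squareNearAP_of_approx_center hd hwin (Q := k) (by linarith) (by linarith)).mono ?_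
    have hk_sq : k ^ 2 ≤ d / k := by rw [le_div_iff₀ (by linarith)]; linarith
    have hsqrt : √(k * d) ≤ d / k := Real.sqrt_le_iff.2 ⟨by positivity, by
      calc k * d = k ^ 2 * (d / k) := by field_simp
        _ ≤ d / k * (d / k) := by gcongr
        _ = (d / k) ^ 2 := (sq _).symm⟩
    linarith
  · have hQ : 1 ≤ d / L := by rwa [one_le_div (by linarith)]
    have hQL : d / L ≤ L / 16 := by
      rw [div_le_iff₀ (by linarith)]
      calc (d : ℝ) = (4 * √d) ^ 2 / 16 := by rw [mul_pow, hd_sq]; ring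
        _ ≤ L ^ 2 / 16 := by gcongr
        _ = L / 16 * L := by ring
    refine (squareNearAP_of_recenter hd hwin hQ (by rw [div_div_cancel₀ (by linarith)])
      (by linarith)).mono ?_
    have hsqrt : √(d / L * d) = d / k := by
      rw [div_mul_eq_mul_div, Real.sqrt_div (by positivity), Real.sqrt_mul_self (by linarith)]
    have hQ_sq : (d / L) ^ 2 ≤ d / k :=
      calc (d / L) ^ 2 = d / k ^ 3 * (d / k) := by rw [← hL_sq]; field_simp
        _ ≤ 1 * (d / k) := by gcongr; exact div_le_one_of_le₀ hkd (by positivity)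
        _ = d / k := one_mul _
    have hQ_le : d / L ≤ (d / L) ^ 2 := le_self_pow₀ hQ two_ne_zero
    linarith

end Window

lemma sq_mem_Icc_of_abs_sub_le {a t m : ℤ} (ha : 0 < a) (ht : 0 ≤ t) (hta : t ≤ 3 * a)
    (hm : |m - (√a + t / (6 * √a))| ≤ t / (6 * √a)) : m ^ 2 ∈ Set.Icc a (a + t) := by
  have haR : (0 : ℝ) < a := by exact_mod_cast ha
  have : (0 : ℝ) ≤ t := by exact_mod_cast ht
  have htaR : (t : ℝ) ≤ 3 * a := by exact_mod_cast hta
  have ha_sq : √(a : ℝ) ^ 2 = a := Real.sq_sqrt haR.le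
  obtain ⟨hlo, hhi⟩ := abs_le.1 hm
  have hsqrt_le : √(a : ℝ) ≤ m := by linarith
  have hlower : (a : ℝ) ≤ m ^ 2 := (Real.sqrt_le_iff.1 hsqrt_le).2
  have hupper : (m : ℝ) ^ 2 ≤ a + t :=
    calc (m : ℝ) ^ 2 ≤ (√a + 2 * (t / (6 * √a))) ^ 2 :=
          pow_le_pow_left₀ ((Real.sqrt_nonneg _).trans hsqrt_le) (by linarith) 2
      _ = √a ^ 2 + 2 / 3 * t + t * t / (9 * √a ^ 2) := by field_simp; ring
      _ ≤ a + 2 / 3 * t + t * (3 * a) / (9 * a) := by rw [ha_sq]; gcongr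
      _ = a + t := by field_simp; ring
  exact ⟨by exact_mod_cast hlower, by exact_mod_cast hupper⟩

lemma four_mul_sqrt_le_mul_div_six_mul_sqrt {a d N : ℝ} (ha : 0 < a) (hd : 0 < d) (hN : 0 < N)
    (h : a ≤ N ^ 2 * d / 1800) : 4 * √d ≤ N * d / (6 * √a) := by
  rw [le_div_iff₀ (by positivity)]
  refine le_of_sq_le_sq ?_ (by positivity)
  calc (4 * √d * (6 * √a)) ^ 2 = 576 * (√d ^ 2 * √a ^ 2) := by ring
    _ = 576 * (d * a) := by rw [Real.sq_sqrt hd.le, Real.sq_sqrt ha.le]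
    _ ≤ 576 * (d * (N ^ 2 * d / 1800)) := by gcongr
    _ ≤ (N * d) ^ 2 := by linarith [sq_nonneg (N * d)]

lemma mul_div_six_mul_sqrt_le {a d N : ℝ} (ha : 0 < a) (hd : 0 ≤ d) (h : N ^ 2 ≤ a) :
    N * d / (6 * √a) ≤ d := by
  rw [div_le_iff₀ (by positivity), mul_comm]
  gcongr
  linarith [Real.le_sqrt_of_sq_le h, Real.sqrt_nonneg a]

lemma div_sqrt_mul_div_six_mul_sqrt {a d N : ℝ} (ha : 0 < a) (hd : 0 < d) (hN : 0 < N) :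
    d / √(N * d / (6 * √a)) =
      √6 * a ^ ((1 : ℝ) / 4) * d ^ ((1 : ℝ) / 2) / N ^ ((1 : ℝ) / 2) := by
  have hquarter : √(√a) = a ^ ((1 : ℝ) / 4) := by
    rw [Real.sqrt_eq_rpow, Real.sqrt_eq_rpow, ← Real.rpow_mul ha.le]
    norm_num
  rw [← hquarter, ← Real.sqrt_eq_rpow, ← Real.sqrt_eq_rpow, Real.sqrt_div (by positivity),
    Real.sqrt_mul hN.le, Real.sqrt_mul (by norm_num)]
  field_simp
  rw [Real.sq_sqrt hd.le]

/-- For integers `a ≥ 0`, `d ≥ 1`, `N ≥ 1` with `max (N*d) (N^2) ≤ a ≤ N^2*d/1800`,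
some term of the arithmetic progression `a, a+d, ..., a+N*d` is within
`C * a^(1/4) * d^(1/2) / N^(1/2)` of a perfect square. -/
theorem closest_square_to_AP_bound_one :
    ∃ C : ℝ, 0 < C ∧ ∀ a d N : ℤ, 0 ≤ a → 1 ≤ d → 1 ≤ N →
      max (N * d) (N ^ 2) ≤ a → (a : ℝ) ≤ (N : ℝ) ^ 2 * d / 1800 →
      ∃ n m : ℤ, 0 ≤ n ∧ n ≤ N ∧
        |((a + n * d - m ^ 2 : ℤ) : ℝ)| ≤
          C * (a : ℝ) ^ ((1 : ℝ) / 4) * (d : ℝ) ^ ((1 : ℝ) / 2) / (N : ℝ) ^ ((1 : ℝ) / 2) := by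
  refine ⟨4 * √6, by positivity, fun a d N _ hd hN hmax hupper => ?_⟩
  obtain ⟨hNd, hN_sq⟩ := max_le_iff.1 hmax
  have ha : 0 < a := lt_of_lt_of_le (by positivity) hN_sq
  have haR : (0 : ℝ) < a := by exact_mod_cast ha
  have hdR : (0 : ℝ) < d := by exact_mod_cast hd
  have hNR : (0 : ℝ) < N := by exact_mod_cast hN
  have hwin (m : ℤ) (hm : |m - (√a + N * d / (6 * √a))| ≤ N * d / (6 * √a)) :
      m ^ 2 ∈ Set.Icc a (a + N * d) :=
    sq_mem_Icc_of_abs_sub_le ha (by positivity) (by linarith) (by push_cast; exact hm)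
  have hnear := squareNearAP_of_window hd hwin
    (four_mul_sqrt_le_mul_div_six_mul_sqrt haR hdR hNR hupper)
    (mul_div_six_mul_sqrt_le haR hdR.le (by exact_mod_cast hN_sq))
  refine hnear.mono (le_of_eq ?_)
  rw [div_sqrt_mul_div_six_mul_sqrt haR hdR hNR]
  ring
end

section
/- There exists an absolute constant C > 0 such that for all integers a ≥ 0, d ≥ 1, N ≥ 1 satisfying N² ≤ a ≤ N·d and a ≤ N²·d/1800, one has δ ≤ C · d^{3/4} / N^{1/4}; that is, there exist an integer n with 0 ≤ n ≤ N and an integer m with |a + n·d − m²| ≤ C · d^{3/4} / N^{1/4}. -/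
/-!
Near `m ^ 2` the progression grows by about `d / (2 * m)` per term on the scale of square roots.
Choose `m` among the roots of the first half of the progression so that this slope is almost the
rational `p / 30`. Passing from the term `n` to `n + 30 * t` and from the root `m` to `m + p * t`
then changes the difference `a + n * d - m ^ 2` into a quadratic in `t` with leading coefficient
`-p ^ 2` and small linear coefficient. At its last nonnegative value this quadratic is at most the
length of one of its steps, `p ^ 2 * (2 * t + 1)`, which is of order `p * √m`. Since `p ^ 2` has
order `d / N` and `m ^ 2` has order at most `N * d`, this is of order `d ^ (3 / 4) / N ^ (1 / 4)`.
-/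

lemma exists_nat_mul_le_and_le_mul {K : Type*} [Field K] [LinearOrder K] [IsStrictOrderedRing K]
    [FloorSemiring K] {α β s : K} (hα : 0 ≤ α) (hβ : 0 < β) (hs : 0 ≤ s)
    (h : α * β ≤ s * (β - α)) : ∃ p : ℕ, p * α ≤ s ∧ s ≤ p * β := by
  refine ⟨⌈s / β⌉₊, ?_, (div_le_iff₀ hβ).1 (Nat.le_ceil _)⟩
  calc (⌈s / β⌉₊ : K) * α ≤ (s / β + 1) * α :=
        mul_le_mul_of_nonneg_right (Nat.ceil_lt_add_one (by positivity)).le hα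
    _ = (s * α + α * β) / β := by field_simp
    _ ≤ s := by rw [div_le_iff₀ hβ]; linarith

lemma exists_nat_sq_mul_le_and_le_sq_mul {a d N : ℝ} (ha : 0 ≤ a) (hN : 0 < N) (hNd : N ≤ d)
    (had : a ≤ N * d) :
    ∃ p : ℕ, p ^ 2 * (a + N * d / 4) ≤ (15 * d) ^ 2 ∧
      (15 * d) ^ 2 ≤ p ^ 2 * (a + N * d / 2) := by
  have hd : 0 < d := hN.trans_le hNd
  have hNd_pos : 0 < N * d := mul_pos hN hd
  have hα_sq : √(a + N * d / 4) ^ 2 = a + N * d / 4 := Real.sq_sqrt (by positivity)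
  have hβ_sq : √(a + N * d / 2) ^ 2 = a + N * d / 2 := Real.sq_sqrt (by positivity)
  have hα : 0 < √(a + N * d / 4) := Real.sqrt_pos.2 (by positivity)
  have hαβ : √(a + N * d / 4) ≤ √(a + N * d / 2) := Real.sqrt_le_sqrt (by linarith)
  set α := √(a + N * d / 4)
  set β := √(a + N * d / 2)
  have hβ : 0 < β := hα.trans_le hαβ
  have hβ_le : β ≤ 5 / 4 * d := by
    refine le_of_sq_le_sq ?_ (by positivity)
    nlinarith [mul_le_mul_of_nonneg_right hNd hd.le]
  have hgap : α * β ≤ 15 * d * (β - α) := by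
    refine le_of_mul_le_mul_right ?_ (add_pos hβ hα)
    calc α * β * (β + α) ≤ β * β * (β + β) := by gcongr
      _ = 2 * β ^ 2 * β := by ring
      _ ≤ 2 * (3 / 2 * (N * d)) * (5 / 4 * d) := by gcongr; linarith
      _ = 15 * d * (N * d / 4) := by ring
      _ = 15 * d * (β ^ 2 - α ^ 2) := by rw [hα_sq, hβ_sq]; ring
      _ = 15 * d * (β - α) * (β + α) := by ring
  obtain ⟨p, hpα, hpβ⟩ := exists_nat_mul_le_and_le_mul hα.le hβ (by positivity) hgap
  refine ⟨p, ?_, ?_⟩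
  · rw [← hα_sq, ← mul_pow]
    exact pow_le_pow_left₀ (by positivity) hpα 2
  · rw [← hβ_sq, ← mul_pow]
    exact pow_le_pow_left₀ (by positivity) hpβ 2

lemma mul_mem_Icc_of_le_mul_of_mul_le {a d N q : ℝ} (ha : 0 ≤ a) (hd : 0 < d) (had : a ≤ N * d)
    (hq : 0 ≤ q) (hq_upper : q * (a + N * d / 4) ≤ (15 * d) ^ 2)
    (hq_lower : (15 * d) ^ 2 ≤ q * (a + N * d / 2)) : q * N ∈ Set.Icc (150 * d) (900 * d) := by
  constructor <;> refine le_of_mul_le_mul_right ?_ hd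
  · linarith [mul_le_mul_of_nonneg_left had hq]
  · linarith [mul_nonneg hq ha]

lemma exists_sq_le_and_le_sq_add {x : ℤ} (hx : 0 ≤ x) :
    ∃ m : ℤ, 0 ≤ m ∧ m ^ 2 ≤ x ∧ x ≤ m ^ 2 + 2 * m := by
  lift x to ℕ using hx
  refine ⟨x.sqrt, by positivity, mod_cast Nat.sqrt_le' x, ?_⟩
  have hx_le : (x : ℤ) ≤ x.sqrt * x.sqrt + x.sqrt + x.sqrt := mod_cast Nat.sqrt_le_add x
  linarith

lemma exists_term_mem_Ioc {K : Type*} [Field K] [LinearOrder K] [IsStrictOrderedRing K]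
    [FloorRing K] {a d z : K} (hd : 0 < d) (haz : a ≤ z) :
    ∃ n : ℤ, 0 ≤ n ∧ a + n * d ∈ Set.Ioc (z - d) z := by
  refine ⟨⌊(z - a) / d⌋, Int.floor_nonneg.2 (div_nonneg (sub_nonneg.2 haz) hd.le), ?_, ?_⟩
  · have := (div_lt_iff₀ hd).1 (Int.lt_floor_add_one ((z - a) / d))
    linarith
  · have := (le_div_iff₀ hd).1 (Int.floor_le ((z - a) / d))
    linarith

lemma le_add_one_add_div_of_sq_sub_le {K : Type*} [Field K] [LinearOrder K]
    [IsStrictOrderedRing K] {d m y : K} (hd : 0 ≤ d) (hm : 0 ≤ m) (hy : 0 < y)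
    (h : y ^ 2 - d ≤ (m + 1) ^ 2) : y ≤ m + 1 + d / y := by
  rcases le_total y (m + 1) with hle | hle
  · exact le_add_of_le_of_nonneg hle (by positivity)
  · have : y - (m + 1) ≤ d / y := by
      rw [le_div_iff₀ hy]
      nlinarith [mul_nonneg (sub_nonneg.2 hle) (add_nonneg hm zero_le_one)]
    linarith

lemma exists_term_sqrt_near {a d : ℤ} {y : ℝ} (ha : 0 ≤ a) (hd : 0 < d) (hy : 0 < y)
    (hay : a ≤ y ^ 2) :
    ∃ n m : ℤ, 0 ≤ n ∧ m ^ 2 ≤ a + n * d ∧ a + n * d ≤ m ^ 2 + 2 * m ∧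
      (a + n * d : ℝ) ≤ y ^ 2 ∧ m ≤ y ∧ y ≤ m + 1 + d / y := by
  have hdR : (0 : ℝ) < d := mod_cast hd
  obtain ⟨n, hn, hn_gt, hn_le⟩ := exists_term_mem_Ioc hdR hay
  obtain ⟨m, hm, hm_sq, hm_sq_add⟩ := exists_sq_le_and_le_sq_add (x := a + n * d) (by positivity)
  have hm_sqR : (m : ℝ) ^ 2 ≤ a + n * d := mod_cast hm_sq
  have hm_sq_addR : (a + n * d : ℝ) ≤ m ^ 2 + 2 * m := mod_cast hm_sq_add
  refine ⟨n, m, hn, hm_sq, hm_sq_add, hn_le, le_of_sq_le_sq (hm_sqR.trans hn_le) hy.le, ?_⟩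
  exact le_add_one_add_div_of_sq_sub_le hdR.le (mod_cast hm) hy (by linarith)

/-- A term `a + n * d` in the first half of the progression, with integer square root `m`, at which
the slope `d / (2 * m)` of the square roots of the progression is close to the rational `p / 30`.
The slope condition is encoded without division by the bounds on `15 * d - p * m`. -/
structure IsRationalSlopeStart (a d N p n m : ℤ) : Prop where
  nonneg_index : 0 ≤ n
  two_mul_index_le : 2 * n ≤ N
  sq_le : m ^ 2 ≤ a + n * d
  le_sq_add : a + n * d ≤ m ^ 2 + 2 * m
  mul_root_le : p * m ≤ 15 * d
  le_mul_root_add : 15 * d ≤ p * m + p ^ 2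
  le_sq_mul : 150 * d ≤ p ^ 2 * N
  sq_mul_le : p ^ 2 * N ≤ 900 * d

lemma exists_isRationalSlopeStart {a d N : ℤ} (ha : 0 ≤ a) (hN : 1 ≤ N) (hNd : N ≤ d)
    (had : a ≤ N * d) : ∃ p n m : ℤ, IsRationalSlopeStart a d N p n m := by
  have hd : 0 < d := by linarith
  have hdR : (0 : ℝ) < d := mod_cast hd
  have hNdR : (N : ℝ) ≤ d := mod_cast hNd
  have haR : (0 : ℝ) ≤ a := mod_cast ha
  have hNR : (0 : ℝ) < N := mod_cast (by linarith : 0 < N)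
  have hadR : (a : ℝ) ≤ N * d := mod_cast had
  obtain ⟨p, hp_upper, hp_lower⟩ := exists_nat_sq_mul_le_and_le_sq_mul haR hNR hNdR hadR
  obtain ⟨hlow, hup⟩ := mul_mem_Icc_of_le_mul_of_mul_le haR hdR hadR (by positivity)
    hp_upper hp_lower
  have hp : (2 : ℝ) ≤ p := by
    have : (150 : ℝ) ≤ p ^ 2 := le_of_mul_le_mul_right (by linarith) hNR
    exact le_of_sq_le_sq (by linarith) (by positivity)
  set y : ℝ := 15 * d / p with hy
  have hy_pos : 0 < y := by positivity
  have hpy : p * y = 15 * d := by rw [hy]; field_simp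
  have hdy : d / y = p / 15 := by rw [hy]; field_simp
  have hy_ge : a + N * d / 4 ≤ y ^ 2 := by
    rw [hy, div_pow, le_div_iff₀ (by positivity)]; linarith
  have hy_le : y ^ 2 ≤ a + N * d / 2 := by
    rw [hy, div_pow, div_le_iff₀ (by positivity)]; linarith
  have hay : a ≤ y ^ 2 := by nlinarith [mul_pos hNR hdR]
  obtain ⟨n, m, hn, hm_sq, hm_sq_add, hn_le, hmy, hym⟩ :=
    exists_term_sqrt_near ha hd hy_pos hay
  rw [hdy] at hym
  have hn_half : 2 * (n : ℝ) ≤ N := by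
    refine le_of_mul_le_mul_right ?_ hdR
    linarith
  have hpm_le : (p : ℝ) * m ≤ 15 * d := hpy ▸ mul_le_mul_of_nonneg_left hmy (by positivity)
  have hpm_ge : 15 * (d : ℝ) ≤ p * m + p ^ 2 := by
    calc 15 * (d : ℝ) = p * y := hpy.symm
      _ ≤ p * (m + p) := by gcongr; linarith
      _ = p * m + p ^ 2 := by ring
  exact ⟨p, n, m, hn, mod_cast hn_half, hm_sq, hm_sq_add, mod_cast hpm_le, mod_cast hpm_ge,
    mod_cast hlow, mod_cast hup⟩

lemma exists_last_nonneg {R : Type*} [Zero R] [LinearOrder R] {f : ℕ → R} (h₀ : 0 ≤ f 0)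
    (hneg : ∃ t, f t < 0) : ∃ t, 0 ≤ f t ∧ f (t + 1) < 0 := by
  by_contra! hstep
  obtain ⟨t, ht⟩ := hneg
  exact ht.not_ge (Nat.rec h₀ hstep t)

lemma exists_quadratic_mem_Icc {R : Type*} [CommRing R] [LinearOrder R] [IsStrictOrderedRing R]
    [Archimedean R] {b u c : R} (hb : 0 ≤ b) (hu : 0 ≤ u) (hc : 0 < c) (huc : u ≤ 2 * c) :
    ∃ t : ℕ, b + u * t - c * t ^ 2 ∈ Set.Icc 0 (c * (2 * t + 1)) ∧ c * (t - 1) ^ 2 ≤ b + c := by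
  have hneg : ∃ t : ℕ, b + u * t - c * (t : R) ^ 2 < 0 := by
    obtain ⟨s, hs⟩ := Archimedean.arch (b + u) hc
    refine ⟨s + 1, ?_⟩
    push_cast
    have hlt : b + u < (s + 1) * c := by rw [nsmul_eq_mul] at hs; linarith
    have hs₁ : (1 : R) ≤ s + 1 := by simp
    nlinarith [mul_lt_mul_of_pos_left hlt (zero_lt_one.trans_le hs₁),
      mul_le_mul_of_nonneg_left hs₁ hb]
  obtain ⟨t, ht, ht_succ⟩ := exists_last_nonneg (by simpa using hb) hneg
  push_cast at ht_succ
  refine ⟨t, ⟨ht, by linarith⟩, ?_⟩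
  nlinarith [mul_le_mul_of_nonneg_right huc t.cast_nonneg]

namespace IsRationalSlopeStart

variable {a d N p n m : ℤ}

lemma step_nonneg (h : IsRationalSlopeStart a d N p n m) : 0 ≤ d := by
  linarith [h.le_sq_mul, h.sq_mul_le]

lemma sq_root_le (h : IsRationalSlopeStart a d N p n m) (had : a ≤ N * d) :
    2 * m ^ 2 ≤ 3 * (N * d) := by
  nlinarith [h.sq_le, mul_le_mul_of_nonneg_right h.two_mul_index_le h.step_nonneg]

lemma four_mul_root_le (h : IsRationalSlopeStart a d N p n m) (hNd : N ≤ d) (had : a ≤ N * d) :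
    4 * m ≤ 5 * d := by
  have hd := h.step_nonneg
  refine le_of_sq_le_sq ?_ (by positivity)
  nlinarith [h.sq_root_le had, mul_le_mul_of_nonneg_right hNd hd]

lemma exists_shift (h : IsRationalSlopeStart a d N p n m) (hp : p ≠ 0) :
    ∃ t : ℕ, |a + (n + 30 * t) * d - (m + p * t) ^ 2| ≤ p ^ 2 * (2 * t + 1) ∧
      p ^ 2 * (t - 1 : ℤ) ^ 2 ≤ 2 * m + p ^ 2 := by
  obtain ⟨t, ⟨hnonneg, hle⟩, ht⟩ := exists_quadratic_mem_Icc
    (b := a + n * d - m ^ 2) (u := 30 * d - 2 * (p * m)) (c := p ^ 2)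
    (by linarith [h.sq_le]) (by linarith [h.mul_root_le]) (by positivity)
    (by linarith [h.le_mul_root_add])
  refine ⟨t, ?_, by linarith [h.le_sq_add]⟩
  have hshift : a + (n + 30 * t) * d - (m + p * t) ^ 2 =
      a + n * d - m ^ 2 + (30 * d - 2 * (p * m)) * t - p ^ 2 * t ^ 2 := by ring
  rwa [hshift, abs_of_nonneg hnonneg]

lemma sixty_mul_shift_le (h : IsRationalSlopeStart a d N p n m) (hN : 300 ≤ N) (hNd : N ≤ d)
    (had : a ≤ N * d) {t : ℤ} (ht : p ^ 2 * (t - 1) ^ 2 ≤ 2 * m + p ^ 2) :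
    60 * t ≤ N := by
  have hroot : 120 * m ≤ p ^ 2 * N := by
    linarith [h.four_mul_root_le hNd had, h.le_sq_mul]
  have hp_sq : 0 < p ^ 2 := by
    refine pos_of_mul_pos_left (b := N) ?_ (by linarith)
    linarith [h.le_sq_mul]
  have hsq : 60 * (t - 1) ^ 2 ≤ N + 60 := by
    refine le_of_mul_le_mul_left ?_ hp_sq
    linarith
  by_contra! hlt
  nlinarith

end IsRationalSlopeStart

section Estimates

-- The condition `E ^ 4 * N = d ^ 3` encodes `E = d ^ (3 / 4) / N ^ (1 / 4)` without real powers.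

variable {d N E : ℝ}

lemma le_of_pow_four_mul_eq {c : ℝ} (hN : 0 < N) (hc : 0 ≤ c) (hE : 0 ≤ E)
    (hEd : E ^ 4 * N = d ^ 3) (hcN : c * N ≤ 900 * d) (hNd : 300 ^ 3 * d ≤ N ^ 3) :
    c ≤ 13 * E := by
  refine le_of_pow_le_pow_left₀ four_ne_zero (by positivity) ?_
  refine le_of_mul_le_mul_right ?_ (pow_pos hN 4)
  calc c ^ 4 * N ^ 4 = (c * N) ^ 4 := by ring
    _ ≤ (900 * d) ^ 4 := by gcongr
    _ = 900 ^ 4 / 300 ^ 3 * (300 ^ 3 * d) * d ^ 3 := by ring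
    _ = 900 ^ 4 / 300 ^ 3 * (300 ^ 3 * d) * (E ^ 4 * N) := by rw [hEd]
    _ ≤ 900 ^ 4 / 300 ^ 3 * N ^ 3 * (E ^ 4 * N) := by gcongr
    _ = 24300 * (E ^ 4 * N ^ 4) := by ring
    _ ≤ (13 * E) ^ 4 * N ^ 4 := by nlinarith [show 0 ≤ E ^ 4 * N ^ 4 by positivity]

lemma mul_two_mul_le_of_pow_four_mul_eq {c m : ℝ} (hN : 0 < N) (hc : 0 ≤ c)
    (hEd : E ^ 4 * N = d ^ 3) (hcN : c * N ≤ 900 * d) (hm : 2 * m ^ 2 ≤ 3 * (N * d)) :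
    c * (2 * m) ≤ 2300 * E ^ 2 := by
  refine le_of_sq_le_sq ?_ (by positivity)
  refine le_of_mul_le_mul_right ?_ (pow_pos hN 2)
  calc (c * (2 * m)) ^ 2 * N ^ 2 = 2 * (c * N) ^ 2 * (2 * m ^ 2) := by ring
    _ ≤ 2 * (900 * d) ^ 2 * (3 * (N * d)) := by gcongr
    _ = 6 * 900 ^ 2 * N * d ^ 3 := by ring
    _ = 6 * 900 ^ 2 * (E ^ 4 * N ^ 2) := by rw [← hEd]; ring
    _ ≤ (2300 * E ^ 2) ^ 2 * N ^ 2 := by nlinarith [show 0 ≤ E ^ 4 * N ^ 2 by positivity]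

lemma mul_two_mul_add_one_le_of_mul_sub_one_sq_le {c b t : ℝ} (hc : 0 ≤ c) (hcE : c ≤ 13 * E)
    (hcb : c * b ≤ 2300 * E ^ 2) (ht : c * (t - 1) ^ 2 ≤ b + c) :
    c * (2 * t + 1) ≤ 150 * E := by
  have hE : 0 ≤ E := by linarith
  have hshift : c * (t - 1) ≤ 50 * E := by
    refine le_of_sq_le_sq ?_ (by positivity)
    nlinarith [mul_le_mul_of_nonneg_left ht hc, pow_le_pow_left₀ hc hcE 2]
  linarith

end Estimates

lemma exists_abs_sub_sq_le_of_cube_le {a d N : ℤ} {E : ℝ} (ha : 0 ≤ a) (hN : 1 ≤ N)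
    (had : a ≤ N * d) (hE : 0 ≤ E) (hEd : E ^ 4 * N = d ^ 3) (hcube : N ^ 3 ≤ 300 ^ 3 * d) :
    ∃ m : ℤ, |((a - m ^ 2 : ℤ) : ℝ)| ≤ 150 * E := by
  obtain ⟨m, -, hm_sq, hm_sq_add⟩ := exists_sq_le_and_le_sq_add ha
  have hNR : (0 : ℝ) < N := mod_cast (by linarith : 0 < N)
  have hmR : (m : ℝ) ^ 2 ≤ N * d := mod_cast hm_sq.trans had
  have hcubeR : (N : ℝ) ^ 3 ≤ 300 ^ 3 * d := mod_cast hcube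
  have hmE : 2 * (m : ℝ) ≤ 150 * E := by
    refine le_of_pow_le_pow_left₀ four_ne_zero (by positivity) ?_
    refine le_of_mul_le_mul_right ?_ hNR
    calc (2 * (m : ℝ)) ^ 4 * N = 16 * ((m : ℝ) ^ 2) ^ 2 * N := by ring
      _ ≤ 16 * ((N : ℝ) * d) ^ 2 * N := by gcongr
      _ = 16 * (d : ℝ) ^ 2 * (N : ℝ) ^ 3 := by ring
      _ ≤ 16 * (d : ℝ) ^ 2 * (300 ^ 3 * d) := by gcongr
      _ = 16 * 300 ^ 3 * (E ^ 4 * N) := by rw [hEd]; ring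
      _ ≤ (150 * E) ^ 4 * N := by nlinarith [show 0 ≤ E ^ 4 * N by positivity]
  refine ⟨m, le_trans ?_ hmE⟩
  rw [← Int.cast_abs, abs_of_nonneg (sub_nonneg.2 hm_sq)]
  exact_mod_cast (by linarith : a - m ^ 2 ≤ 2 * m)

lemma exists_abs_sub_sq_le_of_le_cube {a d N : ℤ} {E : ℝ} (ha : 0 ≤ a) (hN : 1 ≤ N)
    (hNd : N ≤ d) (had : a ≤ N * d) (hE : 0 ≤ E) (hEd : E ^ 4 * N = d ^ 3)
    (hcube : 300 ^ 3 * d ≤ N ^ 3) :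
    ∃ n m : ℤ, 0 ≤ n ∧ n ≤ N ∧ |((a + n * d - m ^ 2 : ℤ) : ℝ)| ≤ 150 * E := by
  have hN_large : 300 ≤ N := le_of_pow_le_pow_left₀ three_ne_zero (by linarith) (by linarith)
  have hNR : (0 : ℝ) < N := mod_cast (by linarith : 0 < N)
  obtain ⟨p, n, m, h⟩ := exists_isRationalSlopeStart ha hN hNd had
  have hp : p ≠ 0 := by
    rintro rfl
    linarith [h.le_sq_mul]
  obtain ⟨t, hdist, ht⟩ := h.exists_shift hp
  have htN := h.sixty_mul_shift_le hN_large hNd had ht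
  refine ⟨n + 30 * t, m + p * t, by linarith [h.nonneg_index],
    by linarith [h.two_mul_index_le], ?_⟩
  have hpN : (p : ℝ) ^ 2 * N ≤ 900 * d := mod_cast h.sq_mul_le
  have hmR : 2 * (m : ℝ) ^ 2 ≤ 3 * (N * d) := mod_cast h.sq_root_le had
  have htR : (p : ℝ) ^ 2 * (t - 1) ^ 2 ≤ 2 * m + p ^ 2 := mod_cast ht
  calc |((a + (n + 30 * t) * d - (m + p * t) ^ 2 : ℤ) : ℝ)|
      ≤ (p : ℝ) ^ 2 * (2 * t + 1) := mod_cast hdist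
    _ ≤ 150 * E := mul_two_mul_add_one_le_of_mul_sub_one_sq_le (sq_nonneg _)
        (le_of_pow_four_mul_eq hNR (sq_nonneg _) hE hEd hpN (mod_cast hcube))
        (mul_two_mul_le_of_pow_four_mul_eq hNR (sq_nonneg _) hEd hpN hmR) htR

lemma rpow_div_rpow_pow_four_mul {d N : ℝ} (hd : 0 ≤ d) (hN : 0 < N) :
    (d ^ ((3 : ℝ) / 4) / N ^ ((1 : ℝ) / 4)) ^ 4 * N = d ^ 3 := by
  have hd_pow : (d ^ ((3 : ℝ) / 4)) ^ 4 = d ^ 3 := by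
    rw [← Real.rpow_mul_natCast hd, ← Real.rpow_natCast]; norm_num
  have hN_pow : (N ^ ((1 : ℝ) / 4)) ^ 4 = N := by
    rw [← Real.rpow_mul_natCast hN.le]; norm_num
  rw [div_pow, hd_pow, hN_pow, div_mul_cancel₀ _ hN.ne']

theorem closest_square_to_AP_bound_two_general {a d N : ℤ} (ha : 0 ≤ a) (hN : 1 ≤ N)
    (hNd : N ≤ d) (had : a ≤ N * d) :
    ∃ n m : ℤ, 0 ≤ n ∧ n ≤ N ∧
      |((a + n * d - m ^ 2 : ℤ) : ℝ)| ≤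
        150 * (d : ℝ) ^ ((3 : ℝ) / 4) / (N : ℝ) ^ ((1 : ℝ) / 4) := by
  have hNR : (0 : ℝ) < N := mod_cast (by linarith : 0 < N)
  have hdR : (0 : ℝ) ≤ d := mod_cast (by linarith : 0 ≤ d)
  have hEd := rpow_div_rpow_pow_four_mul hdR hNR
  simp only [mul_div_assoc]
  rcases le_total (N ^ 3) (300 ^ 3 * d) with hcube | hcube
  · obtain ⟨m, hm⟩ := exists_abs_sub_sq_le_of_cube_le ha hN had (by positivity) hEd hcube
    exact ⟨0, m, le_rfl, by linarith, by simpa using hm⟩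
  · exact exists_abs_sub_sq_le_of_le_cube ha hN hNd had (by positivity) hEd hcube

/-- For integers `a ≥ 0`, `d ≥ 1`, `N ≥ 1` with `N^2 ≤ a ≤ N*d` and `a ≤ N^2*d/1800`,
some term of the arithmetic progression `a, a+d, ..., a+N*d` is within
`C * d^(3/4) / N^(1/4)` of a perfect square. -/
theorem closest_square_to_AP_bound_two :
    ∃ C : ℝ, 0 < C ∧ ∀ a d N : ℤ, 0 ≤ a → 1 ≤ d → 1 ≤ N →
      N ^ 2 ≤ a → a ≤ N * d → (a : ℝ) ≤ (N : ℝ) ^ 2 * d / 1800 →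
      ∃ n m : ℤ, 0 ≤ n ∧ n ≤ N ∧
        |((a + n * d - m ^ 2 : ℤ) : ℝ)| ≤
          C * (d : ℝ) ^ ((3 : ℝ) / 4) / (N : ℝ) ^ ((1 : ℝ) / 4) := by
  exact ⟨150, by norm_num, fun a d N ha _ hN hNa had _ =>
    closest_square_to_AP_bound_two_general ha hN (by nlinarith) had⟩
end

section
/- There exists an absolute constant C > 0 such that for all integers a ≥ 0, d ≥ 1, N ≥ 1 satisfying max(N·d, N^{2/3}·d^{4/3}) ≤ a ≤ N^{4/3}·d^{4/3}/200, one has δ ≤ C · a^{1/2} / N^{1/2}; that is, there exist an integer n with 0 ≤ n ≤ N and an integer m with |a + n·d − m²| ≤ C · a^{1/2} / N^{1/2}. -/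
/-!
The function `f n = -√(a + n d)` is convex with second differences of size `μ ≈ d² / a^(3/2)`, and
it is enough to find `n ≤ N` with `f n` within `O(1 / √N)` of an integer. The slopes of `f` come
within `O(1 / (q √N))` of some rational `ρ` of denominator `q ≤ √N`, with `q μ N ≤ 1`: if they
vary little, by Dirichlet's theorem, and otherwise because they sweep over a multiple of `1 / Q`
with `Q ≈ 1 / (μ N)`. Starting where the slope is close to `ρ` and walking in the direction in which
`f n - ρ n` increases, this drift gains `1 / q` within `T ≈ 2 / √(q μ)` steps and changes by only
`O(1 / √N)` over each `q` consecutive steps. Along a residue class modulo `q` the fractional part of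
`ρ n` is constant, so for the right class the crossing of a suitable multiple of `1 / q` is a
crossing of an integer by `f`.
-/

theorem exists_lt_not_and_succ {P : ℕ → Prop} {J : ℕ} (h₀ : ¬P 0) (hJ : P J) :
    ∃ j < J, ¬P j ∧ P (j + 1) := by
  induction J with
  | zero => exact absurd hJ h₀
  | succ k ih =>
    by_cases hk : P k
    · obtain ⟨j, hjk, hj⟩ := ih hk
      exact ⟨j, hjk.trans k.lt_succ_self, hj⟩
    · exact ⟨k, k.lt_succ_self, hk, hJ⟩

theorem sub_mem_Icc_of_forall_succ_sub_mem_Icc {R : Type*} [CommRing R] [LinearOrder R]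
    [IsStrictOrderedRing R] {u : ℕ → R} {a b : R} {m n K : ℕ}
    (hu : ∀ i < K, u (i + 1) - u i ∈ Set.Icc a b) (hmn : m ≤ n) (hnK : n ≤ K) :
    u n - u m ∈ Set.Icc (a * (n - m)) (b * (n - m)) := by
  induction n, hmn using Nat.le_induction with
  | base => simp
  | succ n _ ih =>
    obtain ⟨ih_lower, ih_upper⟩ := ih (by lia)
    obtain ⟨h_lower, h_upper⟩ := hu n hnK
    push_cast
    constructor <;> linarith

theorem exists_lt_dvd_mul_add {p : ℤ} {q : ℕ} (hq : 0 < q) (hpq : IsCoprime p q) (w : ℤ) :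
    ∃ r < q, (q : ℤ) ∣ p * r + w := by
  obtain ⟨u, v, huv⟩ := hpq
  obtain ⟨r, hrq, hr⟩ := Int.existsUnique_equiv_nat (-w * u) (Int.natCast_pos.mpr hq)
  refine ⟨r, Int.ofNat_lt.mp hrq, ?_⟩
  obtain ⟨z, hz⟩ := hr.dvd
  exact ⟨v * w - p * z, by linear_combination -p * hz - w * huv⟩

theorem exists_int_div_mem_Ico {x y : ℝ} {q : ℕ} (hq : 0 < q) (hxy : x + 1 / q ≤ y) :
    ∃ c : ℤ, (c / q : ℝ) ∈ Set.Ico x y := by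
  have hqR : (0 : ℝ) < q := by exact_mod_cast hq
  refine ⟨⌈q * x⌉, ?_, lt_of_lt_of_le ?_ hxy⟩
  · rw [le_div_iff₀' hqR]
    exact Int.le_ceil _
  · rw [div_lt_iff₀ hqR, add_mul, one_div_mul_cancel hqR.ne', mul_comm x]
    exact Int.ceil_lt_add_one _

theorem exists_crossing_in_residue_class {α : Type*} [LinearOrder α] {D : ℕ → α} {q r T : ℕ} {c : α}
    (hD : MonotoneOn D (Set.Iic (T + q))) (hrq : r < q) (hqT : q ≤ T)
    (hc : c ∈ Set.Ico (D q) (D T)) :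
    ∃ j, r + j * q ≤ T ∧ D (r + j * q) ≤ c ∧ c < D (r + j * q + q) := by
  have hstart : D (r + 0 * q) ≤ c := by
    refine le_trans (hD ?_ ?_ ?_) hc.1 <;> simp <;> lia
  have hJ := Nat.div_add_mod' (T - r) q
  have hJ_mod := Nat.mod_lt (T - r) (Nat.zero_lt_of_lt hrq)
  have hend : c < D (r + ((T - r) / q + 1) * q) := by
    refine hc.2.trans_le (hD (by simp) ?_ ?_) <;> grind
  obtain ⟨j, hj, hj_le, hj_lt⟩ :=
    exists_lt_not_and_succ (P := fun j ↦ c < D (r + j * q)) hstart.not_gt hend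
  have := Nat.mul_le_mul_right q (Nat.lt_succ_iff.mp hj)
  rw [Nat.succ_mul, ← Nat.add_assoc] at hj_lt
  exact ⟨j, by lia, not_lt.mp hj_le, hj_lt⟩

theorem exists_near_int_of_drift {ρ : ℚ} {D : ℕ → ℝ} {T : ℕ} {η : ℝ}
    (hD : MonotoneOn D (Set.Iic (T + ρ.den)))
    (hgap : D ρ.den + 1 / ρ.den ≤ D T)
    (hstep : ∀ σ ≤ T, D (σ + ρ.den) - D σ ≤ η) :
    ∃ σ ≤ T, ∃ M : ℤ, |ρ * σ + D σ - M| ≤ η := by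
  set q := ρ.den
  have hq : 0 < q := ρ.pos
  have hqT : q ≤ T := by
    by_contra! hTq
    have : D T ≤ D q := hD (by simp) (by simp) hTq.le
    have : 0 < 1 / (q : ℝ) := by positivity
    linarith
  obtain ⟨w, hw⟩ := exists_int_div_mem_Ico hq hgap
  obtain ⟨r, hrq, M, hM⟩ :=
    exists_lt_dvd_mul_add hq (Int.isCoprime_iff_gcd_eq_one.mpr ρ.reduced) w
  obtain ⟨j, hjT, hj_le, hj_lt⟩ := exists_crossing_in_residue_class hD hrq hqT hw
  refine ⟨r + j * q, hjT, M + ρ.num * j, ?_⟩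
  have hcross : D (r + j * q + q) - D (r + j * q) ≤ η := hstep _ hjT
  have hnum : (ρ : ℝ) * q = ρ.num := by exact_mod_cast ρ.mul_den_eq_num
  have hvalue : (ρ : ℝ) * (r + j * q : ℕ) + D (r + j * q) - (M + ρ.num * j : ℤ) =
      D (r + j * q) - w / q := by
    have hr : (ρ : ℝ) * r + w / q = M := by
      have hM' : (ρ.num : ℝ) * r + w = q * M := by exact_mod_cast hM
      field_simp
      linear_combination hM' + r * hnum
    push_cast
    linear_combination hr + j * hnum
  rw [hvalue, abs_le]
  constructor <;> linarith

theorem exists_near_int_of_slopes {ρ : ℚ} {h : ℕ → ℝ} {T : ℕ} {μ c : ℝ} (hμ : 0 ≤ μ)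
    (hslope : ∀ σ < T + ρ.den, h (σ + 1) - h σ - ρ ∈ Set.Icc (μ * σ) c)
    (hT : 2 * ρ.den ≤ T) (hgap : 4 ≤ ρ.den * μ * T ^ 2) :
    ∃ σ ≤ T, ∃ M : ℤ, |h σ - M| ≤ ρ.den * c := by
  have hq : (1 : ℝ) ≤ ρ.den := by exact_mod_cast ρ.pos
  have hTR : 2 * (ρ.den : ℝ) ≤ T := by exact_mod_cast hT
  let D : ℕ → ℝ := fun σ ↦ h σ - ρ * σ
  have hD_succ : ∀ σ < T + ρ.den, D (σ + 1) - D σ ∈ Set.Icc (μ * σ) c := by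
    intro σ hσ
    convert hslope σ hσ using 1
    simp only [D]
    push_cast
    ring
  have hD_sub_nonneg : ∀ σ < T + ρ.den, 0 ≤ D (σ + 1) - D σ := fun σ hσ ↦
    (by positivity : 0 ≤ μ * σ).trans (hD_succ σ hσ).1
  have hD_mono : MonotoneOn D (Set.Iic (T + ρ.den)) :=
    monotoneOn_of_le_add_one Set.ordConnected_Iic fun σ _ _ hσ ↦
      sub_nonneg.mp (hD_sub_nonneg σ hσ)
  have hD_step : ∀ σ ≤ T, D (σ + ρ.den) - D σ ≤ ρ.den * c := by
    intro σ hσ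
    have := (sub_mem_Icc_of_forall_succ_sub_mem_Icc
      (fun i hi ↦ ⟨hD_sub_nonneg i hi, (hD_succ i hi).2⟩)
      (Nat.le_add_right σ ρ.den) (by lia)).2
    push_cast at this
    linarith
  have hD_gap : D ρ.den + 1 / ρ.den ≤ D T := by
    have hquad := (sub_mem_Icc_of_forall_succ_sub_mem_Icc
      (u := fun σ ↦ D σ - μ * (σ * (σ - 1) / 2)) (a := 0) (b := c) (m := ρ.den) (n := T) (K := T)
      ?_ (by lia) le_rfl).1
    · have hinv : 1 / (ρ.den : ℝ) ≤ μ * (T ^ 2 / 4) := by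
        rw [div_le_iff₀ (by positivity)]
        linarith
      have : (T : ℝ) ^ 2 / 4 ≤ T * (T - 1) / 2 - ρ.den * (ρ.den - 1) / 2 := by nlinarith
      have := mul_le_mul_of_nonneg_left this hμ
      linarith
    · intro σ hσ
      obtain ⟨hlower, hupper⟩ := hD_succ σ (by lia)
      have : 0 ≤ μ * σ := by positivity
      push_cast
      constructor <;> linarith
  simpa [D] using exists_near_int_of_drift hD_mono hD_gap hD_step

theorem exists_near_int_of_initial_slope {ρ : ℚ} {g : ℕ → ℝ} {T : ℕ} {μ ν δ : ℝ}
    (hμ : 0 ≤ μ)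
    (hg : ∀ i, i + 2 ≤ T + ρ.den → g (i + 2) - 2 * g (i + 1) + g i ∈ Set.Icc μ ν)
    (hδ : g 1 - g 0 - ρ ∈ Set.Icc 0 δ) (hT : 2 * ρ.den ≤ T) (hgap : 4 ≤ ρ.den * μ * T ^ 2) :
    ∃ σ ≤ T, ∃ M : ℤ, |g σ - M| ≤ ρ.den * (δ + ν * (T + ρ.den)) := by
  have hden := ρ.pos
  have hν : 0 ≤ ν := hμ.trans ((hg 0 (by lia)).1.trans (hg 0 (by lia)).2)
  refine exists_near_int_of_slopes hμ (fun σ hσ ↦ ?_) hT hgap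
  have hσR : (σ : ℝ) ≤ T + ρ.den := by exact_mod_cast hσ.le
  have hslope : g (σ + 1) - g σ - (g 1 - g 0) ∈ Set.Icc (μ * σ) (ν * σ) := by
    have hsucc : ∀ i < σ, (g (i + 1 + 1) - g (i + 1)) - (g (i + 1) - g i) ∈ Set.Icc μ ν := by
      intro i hi
      convert hg i (by lia) using 1
      ring
    simpa using sub_mem_Icc_of_forall_succ_sub_mem_Icc (u := fun i ↦ g (i + 1) - g i) hsucc
      σ.zero_le le_rfl
  constructor
  · linarith [hslope.1, hδ.1]
  · calc g (σ + 1) - g σ - ρ ≤ δ + ν * σ := by linarith [hslope.2, hδ.2]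
      _ ≤ δ + ν * (T + ρ.den) := by gcongr

theorem exists_near_int_of_slope_near_rat {ρ : ℚ} {f : ℕ → ℝ} {t T K : ℕ} {μ ν δ : ℝ} (hμ : 0 ≤ μ)
    (hf : ∀ i, i + 2 ≤ K → f (i + 2) - 2 * f (i + 1) + f i ∈ Set.Icc μ ν)
    (htT : T + ρ.den ≤ t) (htK : t + T + ρ.den ≤ K) (hδ : |f (t + 1) - f t - ρ| ≤ δ)
    (hT : 2 * ρ.den ≤ T) (hgap : 4 ≤ ρ.den * μ * T ^ 2) :
    ∃ n ≤ K, ∃ M : ℤ, |f n - M| ≤ ρ.den * (δ + ν + ν * (T + ρ.den)) := by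
  have hden := ρ.pos
  have hν : 0 ≤ ν := hμ.trans ((hf 0 (by lia)).1.trans (hf 0 (by lia)).2)
  obtain ⟨hδ_lower, hδ_upper⟩ := abs_le.mp hδ
  rcases le_total (ρ : ℝ) (f (t + 1) - f t) with hρ_le | hle_ρ
  · have hslope : f (t + 1) - f (t + 0) - ρ ∈ Set.Icc 0 (δ + ν) :=
      ⟨sub_nonneg.mpr hρ_le, hδ_upper.trans (le_add_of_nonneg_right hν)⟩
    obtain ⟨σ, hσ, M, hM⟩ := exists_near_int_of_initial_slope (g := fun σ ↦ f (t + σ)) hμ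
      (fun i hi ↦ hf (t + i) (by lia)) hslope hT hgap
    exact ⟨t + σ, by lia, M, hM⟩
  -- The reflection `σ ↦ t - σ` reverses the slopes, which makes the drift along `-ρ` increase.
  · have hreflect : ∀ i, i + 2 ≤ T + (-ρ).den →
        f (t - (i + 2)) - 2 * f (t - (i + 1)) + f (t - i) ∈ Set.Icc μ ν := by
      intro i hi
      rw [Rat.neg_den] at hi
      obtain ⟨j, rfl⟩ : ∃ j, t = j + (i + 2) := Nat.exists_eq_add_of_le' (by lia)
      convert hf j (by lia) using 1
      rw [Nat.add_sub_cancel, show j + (i + 2) - (i + 1) = j + 1 by lia,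
        show j + (i + 2) - i = j + 2 by lia]
      ring
    obtain ⟨m, rfl⟩ : ∃ m, t = m + 1 := Nat.exists_eq_add_of_le' (by lia)
    have hslope : f (m + 1 - 1) - f (m + 1 - 0) - (-ρ : ℚ) ∈ Set.Icc 0 (δ + ν) := by
      obtain ⟨h_lower, h_upper⟩ := hf m (by lia)
      rw [Nat.add_sub_cancel, Nat.sub_zero]
      push_cast
      constructor <;> linarith
    obtain ⟨σ, -, M, hM⟩ := exists_near_int_of_initial_slope (ρ := -ρ)
      (g := fun σ ↦ f (m + 1 - σ)) hμ hreflect hslope hT hgap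
    exact ⟨m + 1 - σ, by lia, M, hM⟩

theorem exists_rat_den_le_sqrt (ξ : ℝ) {k : ℕ} (hk : 0 < k) :
    ∃ ρ : ℚ, ρ.den ≤ √k ∧ ρ.den * |ξ - ρ| ≤ 1 / √k := by
  obtain ⟨ρ, hρ, hden⟩ := Real.exists_rat_abs_sub_le_and_den_le ξ (Nat.sqrt_pos.mpr hk)
  refine ⟨ρ, (Nat.cast_le.mpr hden).trans Real.nat_sqrt_le_real_sqrt, ?_⟩
  calc ρ.den * |ξ - ρ| ≤ ρ.den * (1 / ((k.sqrt + 1) * ρ.den)) := by gcongr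
    _ = 1 / (k.sqrt + 1) := by field_simp
    _ ≤ 1 / √k := by
      gcongr
      exact Real.real_sqrt_le_nat_sqrt_succ

theorem exists_rat_den_le_between_succ {v : ℕ → ℝ} {k m Q : ℕ} (hkm : k ≤ m) (hQ : 0 < Q)
    (hv : v k + 1 / Q ≤ v m) :
    ∃ t, k ≤ t ∧ t < m ∧ ∃ ρ : ℚ, ρ.den ≤ Q ∧ v t ≤ ρ ∧ ρ < v (t + 1) := by
  obtain ⟨c, hstart, hend⟩ := exists_int_div_mem_Ico hQ hv
  let ρ : ℚ := c / Q
  have hρ_cast : (c / Q : ℝ) = ρ := by simp [ρ]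
  rw [hρ_cast] at hstart hend
  have hρ_den : ρ.den ≤ Q := by
    have : (ρ.den : ℤ) ∣ Q := by
      simpa [ρ, Rat.divInt_eq_div] using Rat.den_dvd c Q
    exact Nat.le_of_dvd hQ (Int.natCast_dvd_natCast.mp this)
  obtain ⟨j, hj, hj_le, hj_lt⟩ := exists_lt_not_and_succ (P := fun j ↦ (ρ : ℝ) < v (k + j))
    (J := m - k) hstart.not_gt (by rwa [Nat.add_sub_cancel' hkm])
  exact ⟨k + j, by lia, by lia, ρ, hρ_den, not_lt.mp hj_le, hj_lt⟩

theorem exists_nat_one_div_le_two_mul {x : ℝ} (hx : 0 < x) (hx_half : x ≤ 1 / 2) :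
    ∃ Q : ℕ, 0 < Q ∧ 1 / Q ≤ 2 * x ∧ Q * x ≤ 1 := by
  have hQ : 0 < ⌈1 / (2 * x)⌉₊ := Nat.ceil_pos.mpr (by positivity)
  refine ⟨⌈1 / (2 * x)⌉₊, hQ, ?_, ?_⟩
  · rw [one_div_le (by positivity) (by positivity)]
    exact Nat.le_ceil _
  · calc ⌈1 / (2 * x)⌉₊ * x ≤ (1 / (2 * x) + 1) * x := by
          gcongr
          exact (Nat.ceil_lt_add_one (by positivity)).le
      _ = 1 / 2 + x := by field_simp
      _ ≤ 1 := by linarith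

theorem exists_slope_near_rat {v : ℕ → ℝ} {μ κ : ℝ} {k : ℕ} (hμ : 0 < μ) (hk : 0 < k)
    (hμk : μ * k ≤ 1 / 2) (hv : ∀ i < 3 * k, v (i + 1) - v i ∈ Set.Icc μ (κ * μ)) :
    ∃ t, k ≤ t ∧ t ≤ 3 * k ∧ ∃ ρ : ℚ,
      ρ.den ≤ √k ∧ ρ.den * (μ * k) ≤ 1 ∧ ρ.den * |v t - ρ| ≤ κ / √k := by
  have hκ : 1 ≤ κ := by
    obtain ⟨h_lower, h_upper⟩ := hv 0 (by lia)
    exact (le_mul_iff_one_le_left hμ).mp (h_lower.trans h_upper)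
  by_cases hflat : √k * (μ * k) ≤ 1
  · obtain ⟨ρ, hden, hρ⟩ := exists_rat_den_le_sqrt (v k) hk
    exact ⟨k, le_rfl, by lia, ρ, hden, le_trans (by gcongr) hflat, hρ.trans (by gcongr)⟩
  · obtain ⟨Q, hQ, hQ_inv, hQ_mul⟩ := exists_nat_one_div_le_two_mul (by positivity) hμk
    have hrise : v k + 1 / Q ≤ v (3 * k) := by
      have := (sub_mem_Icc_of_forall_succ_sub_mem_Icc (m := k) hv (by lia) le_rfl).1
      push_cast at this
      linarith
    obtain ⟨t, hkt, htk, ρ, hden, hρ_lower, hρ_upper⟩ :=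
      exists_rat_den_le_between_succ (by lia) hQ hrise
    have hden_mul : ρ.den * (μ * k) ≤ 1 := le_trans (by gcongr) hQ_mul
    have hden_sqrt : ρ.den ≤ √k :=
      le_of_mul_le_mul_right (hden_mul.trans (not_le.mp hflat).le) (by positivity)
    have hnear : |v t - ρ| ≤ κ * μ := by
      have := (hv t htk).2
      rw [abs_le]
      constructor <;> linarith
    refine ⟨t, hkt, htk.le, ρ, hden_sqrt, hden_mul, ?_⟩
    rw [le_div_iff₀ (by positivity)]
    calc ρ.den * |v t - ρ| * √k ≤ ρ.den * (κ * μ) * k := by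
          gcongr
          exact Real.sqrt_le_self_iff.mpr (.inr (by exact_mod_cast hk))
      _ = κ * (ρ.den * (μ * k)) := by ring
      _ ≤ κ := mul_le_of_le_one_right (by linarith) hden_mul

theorem exists_walk_length_of_scales {q : ℕ} {s z : ℝ} (hz : 0 < z) (hs : 4 ≤ s) (hqs : q ≤ s)
    (hzs : z * s ≤ 1) (hzs_sq : 3 ≤ z * s ^ 2) :
    ∃ T : ℕ, 2 * q ≤ T ∧ T + q ≤ s ^ 2 ∧ 2 ≤ z * T ∧ z ^ 2 * (T + q + 1) ≤ 4 / s := by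
  have hT_lower : 2 / z ≤ ⌈2 / z⌉₊ := Nat.le_ceil _
  have hT_upper : (⌈2 / z⌉₊ : ℝ) ≤ 2 / z + 1 := (Nat.ceil_lt_add_one (by positivity)).le
  refine ⟨⌈2 / z⌉₊, ?_, ?_, (div_le_iff₀' hz).mp hT_lower, ?_⟩
  · have hqz : 2 * q ≤ 2 / z := by
      rw [le_div_iff₀ hz]
      linarith [mul_le_mul_of_nonneg_left hqs hz.le]
    exact_mod_cast hqz.trans hT_lower
  · have hsz : 2 / z ≤ 2 * s ^ 2 / 3 := by
      rw [div_le_iff₀ hz]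
      linarith
    nlinarith
  · rw [le_div_iff₀ (by positivity)]
    calc z ^ 2 * (⌈2 / z⌉₊ + q + 1) * s ≤ z ^ 2 * (2 / z + 2 * s) * s := by
          gcongr z ^ 2 * ?_ * s
          linarith
      _ = 2 * (z * s) + 2 * (z * s) ^ 2 := by field_simp
      _ ≤ 2 * 1 + 2 * 1 ^ 2 := by gcongr
      _ = 4 := by norm_num

theorem exists_walk_length {q k : ℕ} {μ : ℝ} (hq : 0 < q) (hqk : q ≤ √k)
    (hqμk : q * (μ * k) ≤ 1) (hμk : μ * k ≤ 1 / 2) (hμk_sq : 9 ≤ μ * k ^ 2) :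
    ∃ T : ℕ, 2 * q ≤ T ∧ T + q ≤ k ∧ 4 ≤ q * μ * T ^ 2 ∧ q * μ * (T + q + 1) ≤ 4 / √k := by
  have hqR : (1 : ℝ) ≤ q := by exact_mod_cast hq
  have hμ : 0 < μ := pos_of_mul_pos_left (by linarith) (sq_nonneg (k : ℝ))
  have hk_sqrt : √(k : ℝ) ^ 2 = k := Real.sq_sqrt k.cast_nonneg
  have hk_large : 4 ≤ √(k : ℝ) := by
    have : μ * k * k ≤ 1 / 2 * k := by gcongr
    exact Real.le_sqrt_of_sq_le (by linarith)
  have hz : 0 < √(q * μ) := by positivity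
  have hz_sq : √(q * μ) ^ 2 = q * μ := Real.sq_sqrt (by positivity)
  have hzs : √(q * μ) * √k ≤ 1 := by
    rw [← Real.sqrt_mul (by positivity), mul_assoc]
    exact Real.sqrt_le_one.mpr hqμk
  have hzk : 3 ≤ √(q * μ) * √k ^ 2 := by
    refine le_of_sq_le_sq ?_ (by positivity)
    calc (3 : ℝ) ^ 2 ≤ μ * k ^ 2 := by linarith
      _ ≤ q * (μ * k ^ 2) := le_mul_of_one_le_left (by positivity) hqR
      _ = (√(q * μ) * √k ^ 2) ^ 2 := by rw [hk_sqrt, mul_pow, hz_sq, mul_assoc]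
  obtain ⟨T, hqT, hTk, hzT, hT⟩ := exists_walk_length_of_scales hz hk_large hqk hzs hzk
  rw [hk_sqrt] at hTk
  rw [hz_sq] at hT
  refine ⟨T, hqT, by exact_mod_cast hTk, ?_, hT⟩
  calc (4 : ℝ) = 2 ^ 2 := by norm_num
    _ ≤ (√(q * μ) * T) ^ 2 := by gcongr
    _ = q * μ * T ^ 2 := by rw [mul_pow, hz_sq]

theorem exists_near_int_of_second_difference {f : ℕ → ℝ} {μ κ : ℝ} {k : ℕ}
    (hf : ∀ i, i + 2 ≤ 4 * k → f (i + 2) - 2 * f (i + 1) + f i ∈ Set.Icc μ (κ * μ))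
    (hμk : μ * k ≤ 1 / 2) (hμk_sq : 9 ≤ μ * k ^ 2) :
    ∃ n ≤ 4 * k, ∃ M : ℤ, |f n - M| ≤ 5 * κ / √k := by
  have hμ : 0 < μ := pos_of_mul_pos_left (by linarith) (sq_nonneg (k : ℝ))
  have hk : 0 < k := by
    by_contra! hk
    norm_num [Nat.le_zero.mp hk] at hμk_sq
  have hκ : 0 ≤ κ := by
    obtain ⟨h_lower, h_upper⟩ := hf 0 (by lia)
    exact nonneg_of_mul_nonneg_left (hμ.le.trans (h_lower.trans h_upper)) hμ
  obtain ⟨t, hkt, htk, ρ, hρk, hρμ, hρ⟩ :=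
    exists_slope_near_rat (v := fun i ↦ f (i + 1) - f i) (κ := κ) hμ hk hμk fun i hi ↦ by
      convert hf i (by lia) using 1
      ring
  obtain ⟨T, hqT, hTk, hgap, hT⟩ := exists_walk_length ρ.pos hρk hρμ hμk hμk_sq
  obtain ⟨n, hn, M, hM⟩ :=
    exists_near_int_of_slope_near_rat (t := t) (T := T) hμ.le hf (by lia) (by lia) le_rfl hqT hgap
  refine ⟨n, hn, M, hM.trans ?_⟩
  calc ρ.den * (|f (t + 1) - f t - ρ| + κ * μ + κ * μ * (T + ρ.den))
      = ρ.den * |f (t + 1) - f t - ρ| + κ * (ρ.den * μ * (T + ρ.den + 1)) := by ring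
    _ ≤ κ / √k + κ * (4 / √k) := by gcongr
    _ = 5 * κ / √k := by ring

theorem second_difference_of_sq_arithmetic {K : Type*} [Field K] [LinearOrder K]
    [IsStrictOrderedRing K] {x y z d : K} (hx : 0 < x) (hy : 0 < y) (hz : 0 < z)
    (hxy : y ^ 2 - x ^ 2 = d) (hyz : z ^ 2 - y ^ 2 = d) :
    2 * y - x - z = 2 * d ^ 2 / ((x + y) * (y + z) * (x + z)) := by
  have hdxy : y - x = d / (x + y) := by
    rw [eq_div_iff (by positivity), ← hxy]
    ring
  have hdyz : z - y = d / (y + z) := by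
    rw [eq_div_iff (by positivity), ← hyz]
    ring
  have hdxz : z - x = 2 * d / (x + z) := by
    rw [eq_div_iff (by positivity)]
    linear_combination hxy + hyz
  calc 2 * y - x - z = (y - x) - (z - y) := by ring
    _ = d * (z - x) / ((x + y) * (y + z)) := by
      rw [hdxy, hdyz]
      field_simp
      ring
    _ = 2 * d ^ 2 / ((x + y) * (y + z) * (x + z)) := by
      rw [hdxz]
      field_simp

theorem prod_add_mem_Icc {R : Type*} [CommRing R] [LinearOrder R] [IsStrictOrderedRing R]
    {a b x y z : R} (ha : 0 ≤ a) (hx : x ∈ Set.Icc a b) (hy : y ∈ Set.Icc a b)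
    (hz : z ∈ Set.Icc a b) :
    (x + y) * (y + z) * (x + z) ∈ Set.Icc (8 * a ^ 3) (8 * b ^ 3) := by
  obtain ⟨hax, hxb⟩ := hx
  obtain ⟨hay, hyb⟩ := hy
  obtain ⟨haz, hzb⟩ := hz
  have hx₀ := ha.trans hax
  have hy₀ := ha.trans hay
  have hz₀ := ha.trans haz
  have hb := hx₀.trans hxb
  constructor
  · calc 8 * a ^ 3 = (a + a) * (a + a) * (a + a) := by ring
      _ ≤ (x + y) * (y + z) * (x + z) := by gcongr
  · calc (x + y) * (y + z) * (x + z) ≤ (b + b) * (b + b) * (b + b) := by gcongr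
      _ = 8 * b ^ 3 := by ring

theorem second_difference_neg_sqrt_mem_Icc {a d x : ℝ} (ha : 0 < a) (hd : 0 ≤ d)
    (hax : a ≤ x) (hxa : x + 2 * d ≤ 2 * a) :
    -√(x + 2 * d) - 2 * -√(x + d) + -√x ∈
      Set.Icc (d ^ 2 / (12 * √a ^ 3)) (3 * (d ^ 2 / (12 * √a ^ 3))) := by
  have hR : 0 < √a := Real.sqrt_pos.mpr ha
  -- The constant satisfies `2 ≤ (36 / 25) ^ 2` and `(36 / 25) ^ 3 ≤ 3`.
  have hsqrt : ∀ y, a ≤ y → y ≤ 2 * a → √y ∈ Set.Icc √a (36 / 25 * √a) := by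
    intro y hay hya
    refine ⟨Real.sqrt_le_sqrt hay, Real.sqrt_le_iff.mpr ⟨by positivity, ?_⟩⟩
    rw [mul_pow, Real.sq_sqrt ha.le]
    linarith
  have hsub : ∀ y, 0 ≤ y → √(y + d) ^ 2 - √y ^ 2 = d := by
    intro y hy
    rw [Real.sq_sqrt (by linarith), Real.sq_sqrt hy, add_sub_cancel_left]
  have hdiff := second_difference_of_sq_arithmetic (d := d) (x := √x) (y := √(x + d))
    (z := √(x + d + d)) (Real.sqrt_pos.mpr (by linarith)) (Real.sqrt_pos.mpr (by linarith))
    (Real.sqrt_pos.mpr (by linarith)) (hsub x (by linarith)) (hsub (x + d) (by linarith))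
  have hprod := prod_add_mem_Icc hR.le (hsqrt x hax (by linarith))
    (hsqrt (x + d) (by linarith) (by linarith)) (hsqrt (x + d + d) (by linarith) (by linarith))
  rw [show -√(x + 2 * d) - 2 * -√(x + d) + -√x = 2 * √(x + d) - √x - √(x + d + d) by ring_nf,
    hdiff]
  generalize (√x + √(x + d)) * (√(x + d) + √(x + d + d)) * (√x + √(x + d + d)) = P at hprod
  obtain ⟨hP_lower, hP_upper⟩ := hprod
  have hP_upper' : P ≤ 24 * √a ^ 3 := by
    have : 0 < √a ^ 3 := by positivity
    linarith
  have hP : 0 < P := lt_of_lt_of_le (by positivity) hP_lower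
  constructor
  · calc d ^ 2 / (12 * √a ^ 3) = 2 * d ^ 2 / (24 * √a ^ 3) := by field_simp; ring
      _ ≤ 2 * d ^ 2 / P := by gcongr
  · calc 2 * d ^ 2 / P ≤ 2 * d ^ 2 / (8 * √a ^ 3) := by gcongr
      _ = 3 * (d ^ 2 / (12 * √a ^ 3)) := by field_simp; ring

theorem second_difference_neg_sqrt_arithmetic_mem_Icc {a d : ℝ} {i : ℕ} (ha : 0 < a) (hd : 0 ≤ d)
    (hi : (i + 2) * d ≤ a) :
    -√(a + (i + 2 : ℕ) * d) - 2 * -√(a + (i + 1 : ℕ) * d) + -√(a + i * d) ∈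
      Set.Icc (d ^ 2 / (12 * √a ^ 3)) (3 * (d ^ 2 / (12 * √a ^ 3))) := by
  have hid : 0 ≤ i * d := by positivity
  convert second_difference_neg_sqrt_mem_Icc (x := a + i * d) ha hd (by linarith)
    (by linarith) using 1
  push_cast
  ring_nf

theorem exists_sqrt_near_int {a d : ℝ} {N : ℕ} (ha : 0 < a) (hd : 0 < d) (hN : 0 < N)
    (hNd : N * d ≤ a) (hlower : N * d ^ 2 ≤ √a ^ 3) (hupper : 2800 * √a ^ 3 ≤ N ^ 2 * d ^ 2) :
    ∃ n ≤ N, ∃ M : ℤ, |√(a + n * d) - M| ≤ 45 / √N := by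
  have hR : 0 < √a ^ 3 := by positivity
  have hN_large : 2800 ≤ N := by
    have : 2800 * (N * d ^ 2) ≤ N * (N * d ^ 2) := by linarith
    exact_mod_cast le_of_mul_le_mul_right this (by positivity)
  obtain ⟨k, hkN, hNk⟩ : ∃ k : ℕ, 4 * k ≤ N ∧ N ≤ 5 * k := ⟨N / 4, by lia, by lia⟩
  have hk : 0 < k := by lia
  have hkN' : 4 * (k : ℝ) ≤ N := by exact_mod_cast hkN
  have hNk' : (N : ℝ) ≤ 5 * k := by exact_mod_cast hNk
  set μ := d ^ 2 / (12 * √a ^ 3)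
  have hμk : μ * k ≤ 1 / 2 := by
    have : 4 * (k : ℝ) * d ^ 2 ≤ N * d ^ 2 := by gcongr
    rw [div_mul_eq_mul_div, div_le_iff₀ (by positivity)]
    linarith
  have hμk_sq : 9 ≤ μ * k ^ 2 := by
    have : (N : ℝ) ^ 2 * d ^ 2 ≤ (5 * k) ^ 2 * d ^ 2 := by gcongr
    rw [div_mul_eq_mul_div, le_div_iff₀ (by positivity)]
    linarith
  have hcurv : ∀ i : ℕ, i + 2 ≤ 4 * k →
      -√(a + (i + 2 : ℕ) * d) - 2 * -√(a + (i + 1 : ℕ) * d) + -√(a + i * d) ∈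
        Set.Icc μ (3 * μ) := by
    intro i hi
    have hid : (i + 2 : ℝ) * d ≤ N * d := by
      gcongr
      exact_mod_cast hi.trans hkN
    exact second_difference_neg_sqrt_arithmetic_mem_Icc ha hd.le (hid.trans hNd)
  obtain ⟨n, hn, M, hM⟩ := exists_near_int_of_second_difference
    (f := fun i : ℕ ↦ -√(a + i * d)) hcurv hμk hμk_sq
  refine ⟨n, hn.trans hkN, -M, ?_⟩
  calc |√(a + n * d) - (-M : ℤ)| = |-√(a + n * d) - M| := by
        rw [← abs_neg, Int.cast_neg, neg_sub', neg_neg]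
    _ ≤ 5 * 3 / √k := hM
    _ = 45 / (3 * √k) := by field_simp; norm_num
    _ ≤ 45 / √N := by
      gcongr
      refine Real.sqrt_le_iff.mpr ⟨by positivity, ?_⟩
      rw [mul_pow, Real.sq_sqrt k.cast_nonneg]
      linarith

theorem abs_sq_sub_sq_le {R : Type*} [CommRing R] [LinearOrder R] [IsStrictOrderedRing R]
    {x y η : R} (h : |x - y| ≤ η) :
    |x ^ 2 - y ^ 2| ≤ η * (2 * |x| + η) := by
  calc |x ^ 2 - y ^ 2| = |x - y| * |2 * x - (x - y)| := by
        rw [← abs_mul]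
        ring_nf
    _ ≤ η * (2 * |x| + η) := by
      gcongr
      · exact (abs_nonneg _).trans h
      · refine (abs_sub _ _).trans ?_
        rw [abs_mul, abs_two]
        gcongr

theorem exists_sq_near_arithmetic_progression {a d : ℝ} {N : ℕ} (ha : 0 < a) (hd : 0 < d)
    (hN : 0 < N) (hNd : N * d ≤ a) (hlower : N * d ^ 2 ≤ √a ^ 3)
    (hupper : 2800 * √a ^ 3 ≤ N ^ 2 * d ^ 2) :
    ∃ n ≤ N, ∃ M : ℤ, |a + n * d - M ^ 2| ≤ 45 * 49 * √a / √N := by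
  obtain ⟨n, hn, M, hM⟩ := exists_sqrt_near_int ha hd hN hNd hlower hupper
  refine ⟨n, hn, M, ?_⟩
  have hN_sqrt : 1 ≤ √(N : ℝ) := Real.one_le_sqrt.mpr (by exact_mod_cast hN)
  have ha_sqrt : 1 ≤ √a := by
    have : 2800 * √a ^ 3 ≤ √a * √a ^ 3 := calc
      2800 * √a ^ 3 ≤ (N * d) ^ 2 := by rwa [mul_pow]
      _ ≤ a ^ 2 := by gcongr
      _ = √a * √a ^ 3 := by rw [← pow_succ', pow_mul (√a) 2 2, Real.sq_sqrt ha.le]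
    linarith [le_of_mul_le_mul_right this (by positivity)]
  have hterm_sqrt : √(a + n * d) ≤ 2 * √a := by
    have : n * d ≤ N * d := by gcongr
    refine Real.sqrt_le_iff.mpr ⟨by positivity, ?_⟩
    rw [mul_pow, Real.sq_sqrt ha.le]
    linarith
  calc |a + n * d - M ^ 2| = |√(a + n * d) ^ 2 - M ^ 2| := by rw [Real.sq_sqrt (by positivity)]
    _ ≤ 45 / √N * (2 * |√(a + n * d)| + 45 / √N) := abs_sq_sub_sq_le hM
    _ ≤ 45 / √N * (2 * (2 * √a) + 45 * √a) := by
      rw [abs_of_nonneg (Real.sqrt_nonneg _)]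
      gcongr
      exact (div_le_self (by norm_num) hN_sqrt).trans (le_mul_of_one_le_right (by norm_num) ha_sqrt)
    _ = 45 * 49 * √a / √N := by ring

theorem rpow_div_three_pow_three {x : ℝ} (hx : 0 ≤ x) (n : ℕ) :
    (x ^ ((n : ℝ) / 3)) ^ 3 = x ^ n := by
  rw [← Real.rpow_mul_natCast hx, ← Real.rpow_natCast]
  norm_num

theorem mul_sq_le_sqrt_pow_three {a d x : ℝ} (ha : 0 ≤ a) (hd : 0 ≤ d) (hx : 0 ≤ x)
    (h : x ^ ((2 : ℝ) / 3) * d ^ ((4 : ℝ) / 3) ≤ a) : x * d ^ 2 ≤ √a ^ 3 := by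
  refine le_of_sq_le_sq ?_ (by positivity)
  calc (x * d ^ 2) ^ 2 = (x ^ ((2 : ℝ) / 3) * d ^ ((4 : ℝ) / 3)) ^ 3 := by
        have hx' := rpow_div_three_pow_three hx 2
        have hd' := rpow_div_three_pow_three hd 4
        push_cast at hx' hd'
        rw [mul_pow (x ^ _), hx', hd']
        ring
    _ ≤ a ^ 3 := by gcongr
    _ = (√a ^ 3) ^ 2 := by rw [pow_right_comm, Real.sq_sqrt ha]

-- The constant `2800` comes from `2800 ^ 2 ≤ 200 ^ 3`.
theorem sqrt_pow_three_le_sq_mul_sq {a d x : ℝ} (ha : 0 ≤ a) (hd : 0 ≤ d) (hx : 0 ≤ x)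
    (h : a ≤ x ^ ((4 : ℝ) / 3) * d ^ ((4 : ℝ) / 3) / 200) : 2800 * √a ^ 3 ≤ x ^ 2 * d ^ 2 := by
  refine le_of_sq_le_sq ?_ (by positivity)
  calc (2800 * √a ^ 3) ^ 2 = 2800 ^ 2 * a ^ 3 := by
        rw [mul_pow, pow_right_comm (√a), Real.sq_sqrt ha]
    _ ≤ (200 * a) ^ 3 := by
      rw [mul_pow]
      gcongr
      norm_num
    _ ≤ (x ^ ((4 : ℝ) / 3) * d ^ ((4 : ℝ) / 3)) ^ 3 := by
      exact pow_le_pow_left₀ (by positivity) (by linarith) 3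
    _ = (x ^ 2 * d ^ 2) ^ 2 := by
      have hx' := rpow_div_three_pow_three hx 4
      have hd' := rpow_div_three_pow_three hd 4
      push_cast at hx' hd'
      rw [mul_pow (x ^ _), hx', hd']
      ring

theorem closest_square_to_AP_bound_four_general :
    ∃ C : ℝ, 0 < C ∧ ∀ (a d : ℝ) (N : ℤ), 0 < d → 0 < N →
      max (N * d) ((N : ℝ) ^ ((2 : ℝ) / 3) * d ^ ((4 : ℝ) / 3)) ≤ a →
      a ≤ (N : ℝ) ^ ((4 : ℝ) / 3) * d ^ ((4 : ℝ) / 3) / 200 →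
      ∃ n m : ℤ, 0 ≤ n ∧ n ≤ N ∧
        |a + n * d - m ^ 2| ≤ C * a ^ ((1 : ℝ) / 2) / (N : ℝ) ^ ((1 : ℝ) / 2) := by
  refine ⟨45 * 49, by norm_num, fun a d N hd hN hmax hupper ↦ ?_⟩
  lift N to ℕ using hN.le
  simp only [Int.cast_natCast, Nat.cast_pos, ← Real.sqrt_eq_rpow] at *
  obtain ⟨hNd, hlower⟩ := max_le_iff.mp hmax
  have ha : 0 < a := lt_of_lt_of_le (by positivity) hNd
  obtain ⟨n, hn, M, hM⟩ := exists_sq_near_arithmetic_progression ha hd hN hNd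
    (mul_sq_le_sqrt_pow_three ha.le hd.le N.cast_nonneg hlower)
    (sqrt_pow_three_le_sq_mul_sq ha.le hd.le N.cast_nonneg hupper)
  exact ⟨n, M, n.cast_nonneg, by exact_mod_cast hn, hM⟩

/-- For integers `a ≥ 0`, `d ≥ 1`, `N ≥ 1` with
`max (N*d) (N^(2/3)*d^(4/3)) ≤ a ≤ N^(4/3)*d^(4/3)/200`,
some term of the arithmetic progression `a, a+d, ..., a+N*d` is within
`C * a^(1/2) / N^(1/2)` of a perfect square. -/
theorem closest_square_to_AP_bound_four :
    ∃ C : ℝ, 0 < C ∧ ∀ a d N : ℤ, 0 ≤ a → 1 ≤ d → 1 ≤ N →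
      max ((N : ℝ) * d) ((N : ℝ) ^ ((2 : ℝ) / 3) * (d : ℝ) ^ ((4 : ℝ) / 3)) ≤ (a : ℝ) →
      (a : ℝ) ≤ (N : ℝ) ^ ((4 : ℝ) / 3) * (d : ℝ) ^ ((4 : ℝ) / 3) / 200 →
      ∃ n m : ℤ, 0 ≤ n ∧ n ≤ N ∧
        |((a + n * d - m ^ 2 : ℤ) : ℝ)| ≤
          C * (a : ℝ) ^ ((1 : ℝ) / 2) / (N : ℝ) ^ ((1 : ℝ) / 2) := by
  obtain ⟨C, hC, h⟩ := closest_square_to_AP_bound_four_general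
  exact ⟨C, hC, fun a d N _ hd hN hmax hupper ↦ by
    exact_mod_cast h a d N (by exact_mod_cast hd) hN hmax hupper⟩
end

section
/- (Huxley) Let M ≥ 12 be a positive integer and let I be a closed interval of length M with integer endpoints. Let f be a real function, twice continuously differentiable on I, and suppose there are real parameters C ≥ 1 and Δ ≤ 1 such that 144/M² ≤ Δ/C ≤ |f''(x)| ≤ C·Δ ≤ 1 for all x in I. Let ε be a real number with max(3·√(C³·Δ), 6·C²·√(2/M)) ≤ ε ≤ 1/4. Then there exist distinct integers m₁, ..., m_R in I such that ‖f(m_r)‖ ≤ ε for 1 ≤ r ≤ R, where R ≥ min(ε⁴·M/(2⁴·3⁴·C⁷·Δ), ε·M/(2⁷·3²·C⁴)). -/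
/-!
Let `f` be convex. Wherever the slope of `f` exceeds a rational `p / q` by at most `2 * ε / q`, the
graph is compared with the lattice lines `q y - p x = j`: while it stays within vertical distance
`ε` of one of them, every integer `m` in one residue class modulo `q` satisfies `‖f m‖ ≤ ε`, and by
the slope bound each crossing of the strip takes length at least `q`, so at least `1 / (2 * q)` of
its integers lie in that class. Since `f m - (p / q) * m` is convex, the graph needs no less time,
in proportion to height, for a strip of height `2 * ε` than for the following gap, and the strips
make up a share `2 * ε * q` of the height. So apart from an initial piece, of length controlled by
strong convexity, the arc contributes at least `ε` times its length.

By Dirichlet's theorem each slope near the middle of the interval is close to some `p / q` with `q`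
bounded. If one of these rationals serves an arc comparable to the whole interval, that arc alone is
enough. Otherwise the slope attains every such `p / q`, the arcs following these points are pairwise
disjoint because distinct fractions are separated, and their total contribution is compared with the
measure of the neighbourhoods covering the middle of the interval.
-/

open scoped NNReal

section NearIntegers

variable {f : ℝ → ℝ} {ε a b : ℝ}

/-- The integers `m ∈ [a, b]` at which the graph of `f` passes within vertical distance `ε` of an
integer point, that is, `‖f m‖ ≤ ε` where `‖·‖` is the distance to the nearest integer. -/
noncomputable def nearIntegers (f : ℝ → ℝ) (ε a b : ℝ) : Finset ℤ :=
  {m ∈ Finset.Icc ⌈a⌉ ⌊b⌋ | |f m - round (f m)| ≤ ε}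

lemma mem_nearIntegers {m : ℤ} :
    m ∈ nearIntegers f ε a b ↔ (m : ℝ) ∈ Set.Icc a b ∧ |f m - round (f m)| ≤ ε := by
  simp [nearIntegers, Int.ceil_le, Int.le_floor]

lemma mem_nearIntegers_of_abs_sub_le {m n : ℤ} (hm : (m : ℝ) ∈ Set.Icc a b)
    (hn : |f m - n| ≤ ε) : m ∈ nearIntegers f ε a b :=
  mem_nearIntegers.2 ⟨hm, (round_le _ n).trans hn⟩

lemma nearIntegers_subset {a' b' : ℝ} (ha : a ≤ a') (hb : b' ≤ b) :
    nearIntegers f ε a' b' ⊆ nearIntegers f ε a b := fun _ hm =>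
  have ⟨hmem, hnear⟩ := mem_nearIntegers.1 hm
  mem_nearIntegers.2 ⟨Set.Icc_subset_Icc ha hb hmem, hnear⟩

lemma nearIntegers_neg_subset :
    nearIntegers (fun x => -f x) ε a b ⊆ nearIntegers f ε a b := fun m hm => by
  obtain ⟨hmem, hnear⟩ := mem_nearIntegers.1 hm
  refine mem_nearIntegers_of_abs_sub_le (n := -round (-f m)) hmem ?_
  rw [← abs_neg]
  exact (congrArg abs (by push_cast; ring)).trans_le hnear

lemma card_nearIntegers_comp_neg_le :
    (nearIntegers (fun x => f (-x)) ε (-b) (-a)).card ≤ (nearIntegers f ε a b).card := by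
  refine Finset.card_le_card_of_injOn Neg.neg (fun m hm => ?_) neg_injective.injOn
  obtain ⟨hmem, hnear⟩ := mem_nearIntegers.1 hm
  refine mem_nearIntegers.2 ⟨?_, by simpa using hnear⟩
  push_cast
  exact ⟨by linarith [hmem.2], by linarith [hmem.1]⟩

end NearIntegers

section ResidueClasses

lemma sub_div_two_le_card_Icc {x y : ℝ} (h : 1 ≤ y - x) :
    (y - x) / 2 ≤ ((Finset.Icc ⌈x⌉ ⌊y⌋).card : ℝ) := by
  have hlt : y - x - 1 < ((⌊y⌋ + 1 - ⌈x⌉ : ℤ) : ℝ) := by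
    push_cast
    linarith [Int.sub_one_lt_floor y, Int.ceil_lt_add_one x]
  have hpos : 1 ≤ ⌊y⌋ + 1 - ⌈x⌉ := by
    have : (0 : ℝ) < ((⌊y⌋ + 1 - ⌈x⌉ : ℤ) : ℝ) := by linarith
    exact_mod_cast this
  have hone : (1 : ℝ) ≤ ((⌊y⌋ + 1 - ⌈x⌉ : ℤ) : ℝ) := by exact_mod_cast hpos
  rw [Int.card_Icc, ← Int.cast_natCast, Int.toNat_of_nonneg (by linarith)]
  linarith

lemma sub_div_le_card_filter_dvd (r : ℚ) (j : ℤ) {x y : ℝ} (h : (r.den : ℝ) ≤ y - x) :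
    (y - x) / (2 * r.den) ≤
      ({m ∈ Finset.Icc ⌈x⌉ ⌊y⌋ | (r.den : ℤ) ∣ r.num * m + j}.card : ℝ) := by
  have hq : (0 : ℝ) < r.den := by exact_mod_cast r.den_pos
  obtain ⟨s, t, hst⟩ : IsCoprime r.num (r.den : ℤ) := Int.isCoprime_iff_gcd_eq_one.2 r.reduced
  have hinj : Set.InjOn (fun k : ℤ => -(s * j) + r.den * k) Set.univ := fun k _ l _ hkl =>
    mul_left_cancel₀ (by exact_mod_cast r.den_nz : (r.den : ℤ) ≠ 0) (add_left_cancel hkl)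
  have hlen : (y + s * j) / r.den - (x + s * j) / r.den = (y - x) / r.den := by ring
  calc (y - x) / (2 * r.den) = ((y + s * j) / r.den - (x + s * j) / r.den) / 2 := by
        rw [hlen]; ring
    _ ≤ (Finset.Icc ⌈(x + s * j) / r.den⌉ ⌊(y + s * j) / r.den⌋).card :=
        sub_div_two_le_card_Icc (by rwa [hlen, one_le_div₀ hq])
    _ ≤ _ := by
        refine mod_cast Finset.card_le_card_of_injOn _ (fun k hk => ?_)
          (hinj.mono (Set.subset_univ _))
        simp only [Finset.coe_Icc, Set.mem_Icc, Int.ceil_le, Int.le_floor, div_le_iff₀ hq,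
          le_div_iff₀ hq] at hk
        simp only [Finset.coe_filter, Finset.mem_Icc, Int.ceil_le, Int.le_floor,
          Set.mem_ofPred_eq]
        push_cast at hk ⊢
        exact ⟨⟨by linarith, by linarith⟩, j * t + r.num * k, by linear_combination -j * hst⟩

end ResidueClasses

section LatticeLevel

variable {f : ℝ → ℝ} {r : ℚ} {ε u v : ℝ}

/-- The lattice lines of slope `r = p / q` are `q y - p x = j` with `j : ℤ`; this is the index `j`
of the one through `(m, round (f m))`, the lattice point nearest to `(m, f m)` on its vertical. -/
noncomputable def latticeLevel (f : ℝ → ℝ) (r : ℚ) (m : ℤ) : ℤ :=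
  r.den * round (f m) - r.num * m

lemma sum_card_latticeLevel_le (j₀ : ℤ) (K : ℕ) :
    ∑ k ∈ Finset.range K, {m ∈ nearIntegers f ε u v | latticeLevel f r m = j₀ + k}.card ≤
      (nearIntegers f ε u v).card := by
  have hinj : Function.Injective fun k : ℕ => j₀ + (k : ℤ) := fun k l hkl => by
    simpa using hkl
  calc _ = ∑ j ∈ (Finset.range K).map ⟨_, hinj⟩,
          {m ∈ nearIntegers f ε u v | latticeLevel f r m = j}.card := by simp
    _ = {m ∈ nearIntegers f ε u v | latticeLevel f r m ∈ (Finset.range K).map ⟨_, hinj⟩}.card :=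
        Finset.sum_card_fiberwise_eq_card_filter _ _ _
    _ ≤ _ := Finset.card_filter_le _ _

lemma latticeLevel_eq_of_abs_sub_le (hε : ε < 1 / 2) {m n j : ℤ} (hn : |f m - n| ≤ ε)
    (hj : r.num * m + j = r.den * n) : latticeLevel f r m = j := by
  have hround : round (f m) = n := by
    rw [abs_le] at hn
    exact round_eq_iff.2 ⟨by linarith, by linarith⟩
  rw [latticeLevel, hround]
  linarith

lemma sub_div_le_card_latticeLevel_eq (hε : ε < 1 / 2) {x y : ℝ} (hx : u ≤ x) (hy : y ≤ v)
    {j : ℤ} (hlen : (r.den : ℝ) ≤ y - x)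
    (hnear : ∀ z ∈ Set.Icc x y, |f z - r * z - j / r.den| ≤ ε) :
    (y - x) / (2 * r.den) ≤
      ({m ∈ nearIntegers f ε u v | latticeLevel f r m = j}.card : ℝ) := by
  refine (sub_div_le_card_filter_dvd r j hlen).trans (mod_cast Finset.card_le_card fun m hm => ?_)
  simp only [Finset.mem_filter, Finset.mem_Icc, Int.ceil_le, Int.le_floor] at hm
  obtain ⟨hmem, n, hn⟩ := hm
  have hclose : |f m - n| ≤ ε := by
    have hn' : (n : ℝ) = r * m + j / r.den := by
      have hcast : (r.num : ℝ) * m + j = r.den * n := by exact_mod_cast hn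
      have hq : (r.den : ℝ) ≠ 0 := by exact_mod_cast r.den_nz
      rw [Rat.cast_def]
      field_simp
      linarith
    rw [hn', ← sub_sub]
    exact hnear m hmem
  exact Finset.mem_filter.2
    ⟨mem_nearIntegers_of_abs_sub_le ⟨hx.trans hmem.1, hmem.2.trans hy⟩ hclose,
      latticeLevel_eq_of_abs_sub_le hε hclose hn⟩

end LatticeLevel

/-- `d x` is, for each `x ∈ s`, the slope of a line touching the graph of `f` at `x` and lying below
it with a gap of at least `μ / 2 * (y - x) ^ 2` at `y ∈ s`. For differentiable `f` with derivative
`d` this says that `f` is strongly convex on `s` with modulus `μ`. -/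
def StrongSubgradientOn (f d : ℝ → ℝ) (μ : ℝ) (s : Set ℝ) : Prop :=
  ∀ ⦃x⦄, x ∈ s → ∀ ⦃y⦄, y ∈ s → f x + d x * (y - x) + μ / 2 * (y - x) ^ 2 ≤ f y

namespace StrongSubgradientOn

variable {f d : ℝ → ℝ} {μ : ℝ} {s t : Set ℝ} {x y z : ℝ}

lemma mono (h : StrongSubgradientOn f d μ s) (hts : t ⊆ s) : StrongSubgradientOn f d μ t :=
  fun _ hx _ hy => h (hts hx) (hts hy)

lemma sub_mul_const (h : StrongSubgradientOn f d μ s) (c : ℝ) :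
    StrongSubgradientOn (fun x => f x - c * x) (fun x => d x - c) μ s := fun x hx y hy => by
  linarith [h hx hy]

lemma comp_neg (h : StrongSubgradientOn f d μ s) :
    StrongSubgradientOn (fun x => f (-x)) (fun x => -d (-x)) μ (Neg.neg ⁻¹' s) :=
  fun x hx y hy => by linear_combination h hx hy

lemma mul_sub_le_slope_sub (h : StrongSubgradientOn f d μ s) (hx : x ∈ s) (hy : y ∈ s)
    (hxy : x ≤ y) : μ * (y - x) ≤ d y - d x := by
  rcases hxy.eq_or_lt with rfl | hlt
  · simp
  · refine le_of_mul_le_mul_right ?_ (sub_pos.2 hlt)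
    linear_combination h hx hy + h hy hx

lemma mul_abs_sub_le_abs_slope_sub (h : StrongSubgradientOn f d μ s) (hx : x ∈ s) (hy : y ∈ s) :
    μ * |x - y| ≤ |d x - d y| := by
  wlog hxy : x ≤ y generalizing x y
  · rw [abs_sub_comm x, abs_sub_comm (d x)]
    exact this hy hx (le_of_not_ge hxy)
  rw [abs_sub_comm x, abs_sub_comm (d x), abs_of_nonneg (sub_nonneg.2 hxy)]
  exact (h.mul_sub_le_slope_sub hx hy hxy).trans (le_abs_self _)

lemma monotoneOn_slope (h : StrongSubgradientOn f d μ s) (hμ : 0 ≤ μ) : MonotoneOn d s :=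
  fun _ hx _ hy hxy => sub_nonneg.1 <|
    (mul_nonneg hμ (sub_nonneg.2 hxy)).trans (h.mul_sub_le_slope_sub hx hy hxy)

lemma slope_mul_sub_le (h : StrongSubgradientOn f d μ s) (hμ : 0 ≤ μ) (hx : x ∈ s) (hy : y ∈ s) :
    d x * (y - x) ≤ f y - f x := by
  have hgap : 0 ≤ μ / 2 * (y - x) ^ 2 := by positivity
  linarith [h hx hy]

lemma monotoneOn (h : StrongSubgradientOn f d μ s) (hμ : 0 ≤ μ) (hd : ∀ x ∈ s, 0 ≤ d x) :
    MonotoneOn f s := fun x hx _ hy hxy => sub_nonneg.1 <|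
  (mul_nonneg (hd x hx) (sub_nonneg.2 hxy)).trans (h.slope_mul_sub_le hμ hx hy)

lemma continuousOn (h : StrongSubgradientOn f d μ s) (hμ : 0 ≤ μ) {B : ℝ}
    (hB : ∀ x ∈ s, |d x| ≤ B) : ContinuousOn f s := by
  have hbound : ∀ x ∈ s, ∀ y ∈ s, f x - f y ≤ B * |x - y| := fun x hx y hy =>
    calc f x - f y ≤ d x * (x - y) := by linarith [h.slope_mul_sub_le hμ hx hy]
      _ ≤ |d x| * |x - y| := (le_abs_self _).trans (abs_mul _ _).le
      _ ≤ B * |x - y| := by gcongr; exact hB x hx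
  refine (LipschitzOnWith.of_dist_le' (K := B) fun x hx y hy => ?_).continuousOn
  rw [Real.dist_eq, Real.dist_eq, abs_le']
  refine ⟨hbound x hx y hy, ?_⟩
  rw [neg_sub, abs_sub_comm]
  exact hbound y hy x hx

lemma sub_mul_sub_le_sub_mul_sub (h : StrongSubgradientOn f d μ s) (hμ : 0 ≤ μ) (hx : x ∈ s)
    (hy : y ∈ s) (hz : z ∈ s) (hxy : x ≤ y) (hyz : y ≤ z) :
    (f y - f x) * (z - y) ≤ (f z - f y) * (y - x) := by
  have hleft : f y - f x ≤ d y * (y - x) := by linarith [h.slope_mul_sub_le hμ hy hx]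
  calc (f y - f x) * (z - y) ≤ d y * (y - x) * (z - y) :=
        mul_le_mul_of_nonneg_right hleft (sub_nonneg.2 hyz)
    _ = d y * (z - y) * (y - x) := by ring
    _ ≤ (f z - f y) * (y - x) :=
        mul_le_mul_of_nonneg_right (h.slope_mul_sub_le hμ hy hz) (sub_nonneg.2 hxy)

lemma sub_le_sqrt (h : StrongSubgradientOn f d μ s) (hμ : 0 < μ) (hx : x ∈ s) (hy : y ∈ s)
    (hxy : x ≤ y) (hdx : 0 ≤ d x) {c : ℝ} (hf : f y ≤ f x + c) : y - x ≤ √(2 * c / μ) := by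
  refine Real.le_sqrt_of_sq_le ((le_div_iff₀ hμ).2 ?_)
  linarith [h hx hy, mul_nonneg hdx (sub_nonneg.2 hxy)]

end StrongSubgradientOn

section Arc

variable {f d : ℝ → ℝ} {r : ℚ} {μ ε u v : ℝ}

lemma mul_sub_le_card_latticeLevel_eq (h : StrongSubgradientOn f d μ (Set.Icc u v)) (hμ : 0 ≤ μ)
    (hε : 0 < ε) (hε' : ε < 1 / 2) (hrd : ∀ x ∈ Set.Icc u v, r ≤ d x)
    (hdr : ∀ x ∈ Set.Icc u v, d x ≤ r + 2 * ε / r.den) {j : ℤ} {α β γ : ℝ}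
    (hα : α ∈ Set.Icc u v) (hβ : β ∈ Set.Icc u v) (hγ : γ ∈ Set.Icc u v) (hβγ : β ≤ γ)
    (hfα : f α - r * α = j / r.den - ε) (hfβ : f β - r * β = j / r.den + ε)
    (hfγ : f γ - r * γ ≤ j / r.den + ε + 1 / r.den) :
    ε * (γ - β) ≤ ({m ∈ nearIntegers f ε u v | latticeLevel f r m = j}.card : ℝ) := by
  have hq : (0 : ℝ) < r.den := by exact_mod_cast r.den_pos
  have hg := h.sub_mul_const r
  have hmono := hg.monotoneOn hμ fun x hx => sub_nonneg.2 (hrd x hx)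
  have hαβ : α ≤ β := (hmono.reflect_lt hα hβ (by simp only [hfα, hfβ]; linarith)).le
  have hwidth : (r.den : ℝ) ≤ β - α := by
    have hslope : 2 * ε ≤ 2 * ε / r.den * (β - α) :=
      calc 2 * ε ≤ (d β - r) * (β - α) := by linarith [hg.slope_mul_sub_le hμ hβ hα]
        _ ≤ 2 * ε / r.den * (β - α) :=
          mul_le_mul_of_nonneg_right (by linarith [hdr β hβ]) (sub_nonneg.2 hαβ)
    rw [div_mul_eq_mul_div, le_div_iff₀ hq] at hslope
    exact le_of_mul_le_mul_left hslope (by linarith)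
  have hchord : 2 * ε * (γ - β) ≤ 1 / r.den * (β - α) :=
    calc 2 * ε * (γ - β) = (f β - r * β - (f α - r * α)) * (γ - β) := by rw [hfα, hfβ]; ring
      _ ≤ (f γ - r * γ - (f β - r * β)) * (β - α) :=
        hg.sub_mul_sub_le_sub_mul_sub hμ hα hβ hγ hαβ hβγ
      _ ≤ 1 / r.den * (β - α) :=
        mul_le_mul_of_nonneg_right (by linarith) (sub_nonneg.2 hαβ)
  calc ε * (γ - β) ≤ 1 / r.den * (β - α) / 2 := by linarith
    _ = (β - α) / (2 * r.den) := by field_simp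
    _ ≤ _ := sub_div_le_card_latticeLevel_eq hε' hα.1 hβ.2 hwidth fun z hz => by
      have hzI : z ∈ Set.Icc u v := ⟨hα.1.trans hz.1, hz.2.trans hβ.2⟩
      have hlo := hmono hα hzI hz.1
      have hhi := hmono hzI hβ hz.2
      simp only [hfα, hfβ] at hlo hhi
      exact abs_le.2 ⟨by linarith, by linarith⟩

lemma exists_level_crossings {g : ℝ → ℝ} {q : ℝ} (hq : 0 < q) (hε : 0 < ε) (hεq : 2 * ε * q ≤ 1)
    (huv : u ≤ v) (hmono : MonotoneOn g (Set.Icc u v)) (hcont : ContinuousOn g (Set.Icc u v)) :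
    ∃ (j : ℤ) (K : ℕ) (b : ℕ → ℝ), (∀ k, b k ∈ Set.Icc u v) ∧ g (b 0) ≤ g u + 2 / q ∧
      g (b K) = g v ∧ ∀ k < K, g u ≤ (j + k) / q - ε ∧ g (b k) = (j + k) / q + ε ∧
        b k ≤ b (k + 1) ∧ g (b (k + 1)) ≤ (j + k) / q + ε + 1 / q := by
  set j : ℤ := ⌈q * (g u + ε)⌉
  set K : ℕ := ⌈q * (g v - ε) - j⌉₊
  have hju (k : ℕ) : g u + ε ≤ (j + k) / q := by
    rw [le_div_iff₀' hq]
    linarith [Int.le_ceil (q * (g u + ε)), k.cast_nonneg (α := ℝ)]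
  have hmem (k : ℕ) : min ((j + k) / q + ε) (g v) ∈ Set.Icc (g u) (g v) :=
    ⟨le_min (by linarith [hju k])
      (hmono (Set.left_mem_Icc.2 huv) (Set.right_mem_Icc.2 huv) huv), min_le_right _ _⟩
  choose b hb hgb using fun k => intermediate_value_Icc huv hcont (hmem k)
  have hgb_lt {k : ℕ} (hk : k < K) : g (b k) = (j + k) / q + ε ∧ (j + k) / q + ε < g v := by
    have hlt : (j + k) / q < g v - ε := by
      rw [div_lt_iff₀' hq]
      linarith [Nat.lt_ceil.1 hk]
    exact ⟨(hgb k).trans (min_eq_left (by linarith)), by linarith⟩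
  refine ⟨j, K, b, hb, ?_, (hgb K).trans (min_eq_right ?_), fun k hk =>
    ⟨by linarith [hju k], (hgb_lt hk).1, ?_, ?_⟩⟩
  · have hε2 : 2 * ε ≤ 1 / q := (le_div_iff₀ hq).2 hεq
    have hj1 : (j : ℝ) / q ≤ g u + ε + 1 / q := by
      rw [div_le_iff₀ hq, add_mul, one_div_mul_cancel hq.ne', mul_comm]
      exact (Int.ceil_lt_add_one _).le
    calc g (b 0) ≤ (j + (0 : ℕ)) / q + ε := (hgb 0).trans_le (min_le_left _ _)
      _ = j / q + ε := by simp
      _ ≤ g u + 2 / q := by linarith [add_div 1 1 q]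
  · have hle : g v - ε ≤ (j + K) / q := by
      rw [le_div_iff₀' hq]
      linarith [Nat.le_ceil (q * (g v - ε) - j)]
    linarith
  · refine (hmono.reflect_lt (hb k) (hb (k + 1)) ?_).le
    rw [(hgb_lt hk).1, hgb, lt_min_iff]
    refine ⟨?_, (hgb_lt hk).2⟩
    gcongr
    exact k.lt_succ_self
  · refine (hgb _).trans_le ((min_le_left _ _).trans_eq ?_)
    push_cast
    ring

lemma mul_sub_sqrt_le_card_nearIntegers_of_le_slope
    (h : StrongSubgradientOn f d μ (Set.Icc u v)) (hμ : 0 < μ) (hε : 0 < ε) (hε' : ε < 1 / 2)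
    (hq : 2 * ε * r.den ≤ 1) (huv : u ≤ v) (hrd : ∀ x ∈ Set.Icc u v, r ≤ d x)
    (hdr : ∀ x ∈ Set.Icc u v, d x ≤ r + 2 * ε / r.den) :
    ε * (v - u - √(4 / (r.den * μ))) ≤ (nearIntegers f ε u v).card := by
  have hq0 : (0 : ℝ) < r.den := by exact_mod_cast r.den_pos
  have hu : u ∈ Set.Icc u v := Set.left_mem_Icc.2 huv
  have hv : v ∈ Set.Icc u v := Set.right_mem_Icc.2 huv
  have hg := h.sub_mul_const r
  have hd0 : ∀ x ∈ Set.Icc u v, 0 ≤ d x - r := fun x hx => sub_nonneg.2 (hrd x hx)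
  have hcont := hg.continuousOn hμ.le (B := 2 * ε / r.den)
    fun x hx => by rw [abs_of_nonneg (hd0 x hx)]; linarith [hdr x hx]
  obtain ⟨j, K, b, hb, hb0, hbK, hlevel⟩ :=
    exists_level_crossings hq0 hε hq huv (hg.monotoneOn hμ.le hd0) hcont
  have hstart : b 0 - u ≤ √(4 / (r.den * μ)) :=
    (hg.sub_le_sqrt hμ hu (hb 0) (hb 0).1 (hd0 u hu) hb0).trans_eq
      (congrArg _ (by field_simp; norm_num))
  have hend : v ≤ b K := by
    have := hg.sub_le_sqrt hμ (hb K) hv (hb K).2 (hd0 _ (hb K)) (c := 0) (by linarith)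
    simpa using this
  have hcell : ∀ k ∈ Finset.range K, ε * (b (k + 1) - b k) ≤
      ({m ∈ nearIntegers f ε u v | latticeLevel f r m = j + k}.card : ℝ) := fun k hk => by
    obtain ⟨hgu, hgb, hle, hgb'⟩ := hlevel k (Finset.mem_range.1 hk)
    obtain ⟨α, hα, hgα⟩ := intermediate_value_Icc (hb k).1
      (hcont.mono (Set.Icc_subset_Icc_right (hb k).2)) ⟨hgu, by linarith⟩
    exact mul_sub_le_card_latticeLevel_eq h hμ.le hε hε' hrd hdr
      (Set.Icc_subset_Icc_right (hb k).2 hα) (hb k) (hb (k + 1)) hle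
      (by push_cast; exact hgα) (by push_cast; exact hgb) (by push_cast; exact hgb')
  calc ε * (v - u - √(4 / (r.den * μ))) ≤ ε * (b K - b 0) :=
        mul_le_mul_of_nonneg_left (by linarith) hε.le
    _ = ∑ k ∈ Finset.range K, ε * (b (k + 1) - b k) := by
        rw [← Finset.mul_sum, Finset.sum_range_sub]
    _ ≤ _ := Finset.sum_le_sum hcell
    _ ≤ _ := by exact_mod_cast sum_card_latticeLevel_le j K

lemma mul_sub_sqrt_le_card_nearIntegers_of_slope_le
    (h : StrongSubgradientOn f d μ (Set.Icc u v)) (hμ : 0 < μ) (hε : 0 < ε) (hε' : ε < 1 / 2)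
    (hq : 2 * ε * r.den ≤ 1) (huv : u ≤ v) (hdr : ∀ x ∈ Set.Icc u v, d x ≤ r)
    (hrd : ∀ x ∈ Set.Icc u v, r - 2 * ε / r.den ≤ d x) :
    ε * (v - u - √(4 / (r.den * μ))) ≤ (nearIntegers f ε u v).card := by
  have hneg : ∀ x ∈ Set.Icc (-v) (-u), -x ∈ Set.Icc u v := fun x hx =>
    ⟨by linarith [hx.2], by linarith [hx.1]⟩
  have hle := mul_sub_sqrt_le_card_nearIntegers_of_le_slope (r := -r) (h.comp_neg.mono hneg) hμ hε
    hε' (by simpa using hq) (neg_le_neg huv)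
    (fun x hx => by simpa using hdr _ (hneg x hx))
    (fun x hx => by
      push_cast [Rat.neg_den]
      linarith [hrd _ (hneg x hx)])
  calc ε * (v - u - √(4 / (r.den * μ))) = ε * (-u - -v - √(4 / ((-r).den * μ))) := by
        rw [Rat.neg_den]; ring
    _ ≤ _ := hle
    _ ≤ _ := by exact_mod_cast card_nearIntegers_comp_neg_le

lemma mul_half_sub_sqrt_le_card_nearIntegers_of_abs_slope_sub_le
    (h : StrongSubgradientOn f d μ (Set.Icc u v)) (hμ : 0 < μ) (hε : 0 < ε) (hε' : ε < 1 / 2)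
    (hq : 2 * ε * r.den ≤ 1) (huv : u ≤ v)
    (hdr : ∀ x ∈ Set.Icc u v, |d x - r| ≤ 2 * ε / r.den) :
    ε * ((v - u) / 2 - √(4 / (r.den * μ))) ≤ (nearIntegers f ε u v).card := by
  set w : ℝ := (u + v) / 2 with hw
  have huw : u ≤ w := by linarith
  have hwv : w ≤ v := by linarith
  have hmono := h.monotoneOn_slope hμ.le
  rcases le_total (d w) r with hdw | hdw
  · have hsub : Set.Icc u w ⊆ Set.Icc u v := Set.Icc_subset_Icc_right hwv
    calc ε * ((v - u) / 2 - √(4 / (r.den * μ))) = ε * (w - u - √(4 / (r.den * μ))) := by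
          rw [hw]; ring
      _ ≤ (nearIntegers f ε u w).card :=
          mul_sub_sqrt_le_card_nearIntegers_of_slope_le (h.mono hsub) hμ hε hε' hq huw
            (fun x hx => (hmono (hsub hx) ⟨huw, hwv⟩ hx.2).trans hdw)
            fun x hx => sub_le_of_abs_sub_le_left (hdr x (hsub hx))
      _ ≤ _ := mod_cast Finset.card_le_card (nearIntegers_subset le_rfl hwv)
  · have hsub : Set.Icc w v ⊆ Set.Icc u v := Set.Icc_subset_Icc_left huw
    calc ε * ((v - u) / 2 - √(4 / (r.den * μ))) = ε * (v - w - √(4 / (r.den * μ))) := by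
          rw [hw]; ring
      _ ≤ (nearIntegers f ε w v).card :=
          mul_sub_sqrt_le_card_nearIntegers_of_le_slope (h.mono hsub) hμ hε hε' hq hwv
            (fun x hx => hdw.trans (hmono ⟨huw, hwv⟩ (hsub hx) hx.1))
            fun x hx => sub_le_iff_le_add'.1 (le_of_abs_le (hdr x (hsub hx)))
      _ ≤ _ := mod_cast Finset.card_le_card (nearIntegers_subset huw le_rfl)

lemma sqrt_four_div_le {q ν : ℝ} (hq : 0 < q) (hμ : 0 < μ) (hν : 0 < ν) (hε : 0 < ε)
    (h : 9 * ν ^ 2 * q ≤ μ * ε ^ 2) : √(4 / (q * μ)) ≤ 2 / 3 * (ε / (ν * q)) := by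
  refine (Real.sqrt_le_left (by positivity)).2 ?_
  rw [← mul_div_assoc, div_pow, div_le_div_iff₀ (by positivity) (by positivity)]
  linear_combination (4 / 9 * q) * h

end Arc

section DirichletArcs

variable {f d : ℝ → ℝ} {r s : ℚ} {μ ε a b x : ℝ} {ν : ℝ≥0}

lemma one_le_sub_mul_den_mul_den (h : r < s) : 1 ≤ ((s : ℝ) - r) * (r.den * s.den) := by
  have hint : (1 : ℝ) ≤ s.num * r.den - r.num * s.den := by
    exact_mod_cast Int.add_one_le_iff.2 (sub_pos.2 ((Rat.lt_iff _ _).1 h))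
  have hr : (r : ℝ) * r.den = r.num := by exact_mod_cast Rat.mul_den_eq_num r
  have hs : (s : ℝ) * s.den = s.num := by exact_mod_cast Rat.mul_den_eq_num s
  linear_combination hint - (r.den : ℝ) * hs + (s.den : ℝ) * hr

lemma exists_rat_den_le_abs_sub_le (x : ℝ) {Q : ℝ} (hQ : 1 ≤ Q) :
    ∃ r : ℚ, (r.den : ℝ) ≤ Q ∧ |x - r| ≤ 1 / (r.den * Q) := by
  obtain ⟨r, hxr, hr⟩ := Real.exists_rat_abs_sub_le_and_den_le x (Nat.floor_pos.2 hQ)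
  refine ⟨r, (Nat.le_floor_iff (by linarith)).1 hr, hxr.trans ?_⟩
  rw [mul_comm]
  gcongr
  exact (Nat.lt_floor_add_one Q).le

/-- The elements of `nearIntegers f ε a b` at which the slope `d` of `f` exceeds `r` by at most
`ε / r.den`. These sets are disjoint for different `r` of small denominator. -/
noncomputable def arcIntegers (f d : ℝ → ℝ) (ε a b : ℝ) (r : ℚ) : Finset ℤ :=
  {m ∈ nearIntegers f ε a b | r ≤ d m ∧ d m ≤ r + ε / r.den}

lemma disjoint_arcIntegers (hrs : r ≠ s) (hr : ε * r.den < 1) (hs : ε * s.den < 1) :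
    Disjoint (arcIntegers f d ε a b r) (arcIntegers f d ε a b s) := by
  wlog hlt : r < s generalizing r s
  · exact (this hrs.symm hs hr (hrs.lt_of_le' (le_of_not_gt hlt))).symm
  refine Finset.disjoint_left.2 fun m hmr hms => ?_
  simp only [arcIntegers, Finset.mem_filter] at hmr hms
  have hr0 : (0 : ℝ) < r.den := by exact_mod_cast r.den_pos
  have hs0 : (0 : ℝ) < s.den := by exact_mod_cast s.den_pos
  have hgap : ((s : ℝ) - r) * r.den ≤ ε := (le_div_iff₀ hr0).1 (by linarith)
  have := one_le_sub_mul_den_mul_den hlt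
  have := mul_le_mul_of_nonneg_right hgap hs0.le
  linarith

lemma sq_div_le_card_arcIntegers (h : StrongSubgradientOn f d μ (Set.Icc a b))
    (hd : LipschitzOnWith ν d (Set.Icc a b)) (hμ : 0 < μ) (hν : 0 < ν) (hε : 0 < ε)
    (hε' : ε < 1 / 2) (hq : 2 * ε * r.den ≤ 1) (hνμ : 9 * (ν : ℝ) ^ 2 * r.den ≤ μ * ε ^ 2)
    (hx : a ≤ x) (hdx : d x = r) (hxb : x + ε / (ν * r.den) ≤ b) :
    ε ^ 2 / (3 * ν * r.den) ≤ ((arcIntegers f d ε a b r).card : ℝ) := by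
  have hq0 : (0 : ℝ) < r.den := by exact_mod_cast r.den_pos
  have hν0 : (0 : ℝ) < ν := hν
  set l : ℝ := ε / (ν * r.den) with hl
  have hl0 : 0 < l := by positivity
  have hsub : Set.Icc x (x + l) ⊆ Set.Icc a b := Set.Icc_subset_Icc hx hxb
  have hx' : x ∈ Set.Icc x (x + l) := Set.left_mem_Icc.2 (by linarith)
  have hlo : ∀ y ∈ Set.Icc x (x + l), r ≤ d y := fun y hy =>
    hdx.symm.trans_le ((h.mono hsub).monotoneOn_slope hμ.le hx' hy hy.1)
  have hhi : ∀ y ∈ Set.Icc x (x + l), d y ≤ r + ε / r.den := fun y hy =>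
    calc d y ≤ d x + ν * dist y x := by
          linarith [le_abs_self (d y - d x), hd.dist_le_mul y (hsub hy) x (hsub hx'),
            Real.dist_eq (d y) (d x)]
      _ ≤ r + ν * l := by
          rw [hdx, Real.dist_eq, abs_of_nonneg (sub_nonneg.2 hy.1)]
          gcongr
          linarith [hy.2]
      _ = r + ε / r.den := by rw [hl]; field_simp
  have hcount := mul_sub_sqrt_le_card_nearIntegers_of_le_slope (h.mono hsub) hμ hε hε' hq
    (by linarith) hlo fun y hy => (hhi y hy).trans (by gcongr; linarith)
  calc ε ^ 2 / (3 * ν * r.den) = ε * (l - 2 / 3 * l) := by rw [hl]; field_simp; norm_num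
    _ ≤ ε * (x + l - x - √(4 / (r.den * μ))) :=
        mul_le_mul_of_nonneg_left (by linarith [sqrt_four_div_le hq0 hμ hν0 hε hνμ]) hε.le
    _ ≤ _ := hcount
    _ ≤ _ := mod_cast Finset.card_le_card fun m hm =>
        have hmx := (mem_nearIntegers.1 hm).1
        Finset.mem_filter.2 ⟨nearIntegers_subset hx hxb hm, hlo m hmx, hhi m hmx⟩

lemma exists_slope_eq_of_abs_sub_le (h : StrongSubgradientOn f d μ (Set.Icc a b))
    (hd : ContinuousOn d (Set.Icc a b)) (hμ : 0 < μ) {δ t : ℝ} (hlo : a ≤ x - δ / μ)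
    (hhi : x + δ / μ ≤ b) (hδ : |d x - t| ≤ δ) :
    ∃ y ∈ Set.Icc (x - δ / μ) (x + δ / μ), d y = t := by
  have hδ0 : 0 ≤ δ / μ := div_nonneg ((abs_nonneg _).trans hδ) hμ.le
  have hsub : Set.Icc (x - δ / μ) (x + δ / μ) ⊆ Set.Icc a b := Set.Icc_subset_Icc hlo hhi
  have hx : x ∈ Set.Icc a b := ⟨by linarith, by linarith⟩
  have hleft := h.mul_sub_le_slope_sub (hsub (Set.left_mem_Icc.2 (by linarith))) hx (by linarith)
  have hright := h.mul_sub_le_slope_sub hx (hsub (Set.right_mem_Icc.2 (by linarith))) (by linarith)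
  rw [sub_sub_cancel, mul_div_cancel₀ _ hμ.ne'] at hleft
  rw [add_sub_cancel_left, mul_div_cancel₀ _ hμ.ne'] at hright
  rw [abs_le] at hδ
  exact intermediate_value_Icc (by linarith) (hd.mono hsub) ⟨by linarith, by linarith⟩

lemma sq_div_le_card_arcIntegers_of_abs_sub_le {Q : ℝ}
    (h : StrongSubgradientOn f d μ (Set.Icc a b)) (hd : LipschitzOnWith ν d (Set.Icc a b))
    (hμ : 0 < μ) (hμν : μ ≤ ν) (hε : 0 < ε) (hε' : ε < 1 / 2) (hQ : 2 * ε * Q ≤ 1)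
    (hνμ : 9 * (ν : ℝ) ^ 2 * Q ≤ μ * ε ^ 2) (hr : r.den ≤ Q)
    (hx : x ∈ Set.Icc (a + 3 * (b - a) / 8) (b - 3 * (b - a) / 8))
    (hxr : |d x - r| ≤ 1 / (r.den * Q)) (hshort : 1 / (r.den * Q) / μ ≤ (b - a) / 4) :
    ε ^ 2 / (3 * ν * r.den) ≤ ((arcIntegers f d ε a b r).card : ℝ) := by
  have hq0 : (0 : ℝ) < r.den := by exact_mod_cast r.den_pos
  have hQ0 : 0 < Q := hq0.trans_le hr
  have hν : (0 : ℝ) < ν := hμ.trans_le hμν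
  have hab : 0 < (b - a) / 4 := (by positivity : 0 < 1 / (r.den * Q) / μ).trans_le hshort
  obtain ⟨c, hc, hdc⟩ := exists_slope_eq_of_abs_sub_le h hd.continuousOn hμ
    (by linarith [hx.1]) (by linarith [hx.2]) hxr
  have hl : ε / (ν * r.den) ≤ (b - a) / 8 :=
    calc ε / (ν * r.den) ≤ 1 / (2 * Q) / (μ * r.den) := by
          gcongr
          rw [le_div_iff₀ (by positivity)]
          linarith
      _ = 1 / (r.den * Q) / μ / 2 := by field_simp
      _ ≤ (b - a) / 8 := by linarith
  exact sq_div_le_card_arcIntegers h hd hμ hν hε hε'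
    ((mul_le_mul_of_nonneg_left hr (by positivity)).trans hQ)
    ((mul_le_mul_of_nonneg_left hr (by positivity)).trans hνμ)
    (by linarith [hc.1, hx.1]) hdc (by linarith [hc.2, hx.2])

lemma sub_le_sum_of_forall_exists_abs_sub_le {ι : Type*} {T : Finset ι} {y δ : ι → ℝ} (hμ : 0 < μ)
    (hd : ∀ x ∈ Set.Icc a b, ∀ y ∈ Set.Icc a b, μ * |x - y| ≤ |d x - d y|)
    (hδ : ∀ i ∈ T, 0 ≤ δ i) (hcov : ∀ x ∈ Set.Icc a b, ∃ i ∈ T, |d x - y i| ≤ δ i) :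
    b - a ≤ ∑ i ∈ T, 2 * δ i / μ := by
  set E : ι → Set ℝ := fun i => {x ∈ Set.Icc a b | |d x - y i| ≤ δ i}
  have hsum : ∀ i ∈ T, 0 ≤ 2 * δ i / μ := fun i hi => by have := hδ i hi; positivity
  have hdiam (i : ι) : MeasureTheory.volume (E i) ≤ ENNReal.ofReal (2 * δ i / μ) := by
    refine (Real.volume_le_diam _).trans (Metric.ediam_le fun x hx z hz => ?_)
    rw [edist_dist, Real.dist_eq]
    refine ENNReal.ofReal_le_ofReal ((le_div_iff₀' hμ).2 ?_)
    calc μ * |x - z| ≤ |d x - d z| := hd x hx.1 z hz.1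
      _ ≤ |d x - y i| + |y i - d z| := abs_sub_le _ _ _
      _ ≤ 2 * δ i := by linarith [hx.2, hz.2, abs_sub_comm (y i) (d z)]
  refine (ENNReal.ofReal_le_ofReal_iff (Finset.sum_nonneg hsum)).1 ?_
  calc ENNReal.ofReal (b - a) = MeasureTheory.volume (Set.Icc a b) := Real.volume_Icc.symm
    _ ≤ MeasureTheory.volume (⋃ i ∈ T, E i) := MeasureTheory.measure_mono fun x hx => by
        obtain ⟨i, hi, hxi⟩ := hcov x hx
        exact Set.mem_biUnion hi ⟨hx, hxi⟩
    _ ≤ ∑ i ∈ T, MeasureTheory.volume (E i) := MeasureTheory.measure_biUnion_finset_le _ _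
    _ ≤ ∑ i ∈ T, ENNReal.ofReal (2 * δ i / μ) := Finset.sum_le_sum fun i _ => hdiam i
    _ = ENNReal.ofReal (∑ i ∈ T, 2 * δ i / μ) := (ENNReal.ofReal_sum_of_nonneg hsum).symm

lemma sub_le_sum_of_forall_rat_mem {T : Finset ℚ} {Q : ℝ} (hμ : 0 < μ) (hQ : 1 ≤ Q)
    (hd : ∀ x ∈ Set.Icc a b, ∀ y ∈ Set.Icc a b, μ * |x - y| ≤ |d x - d y|)
    (hT : ∀ x ∈ Set.Icc a b, ∀ r : ℚ, r.den ≤ Q → |d x - r| ≤ 1 / (r.den * Q) → r ∈ T) :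
    b - a ≤ ∑ r ∈ T, 2 / (r.den * Q * μ) := by
  refine (sub_le_sum_of_forall_exists_abs_sub_le (y := fun r : ℚ => r)
    (δ := fun r => 1 / (r.den * Q)) hμ hd (fun r _ => by positivity) fun x hx => ?_).trans_eq
    (Finset.sum_congr rfl fun r _ => by field_simp)
  obtain ⟨r, hr, hxr⟩ := exists_rat_den_le_abs_sub_le (d x) hQ
  exact ⟨r, hT x hx r hr hxr, hxr⟩

lemma sum_card_arcIntegers_le {T : Finset ℚ} (hT : ∀ r ∈ T, ε * r.den < 1) :
    ∑ r ∈ T, (arcIntegers f d ε a b r).card ≤ (nearIntegers f ε a b).card := by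
  rw [← Finset.card_biUnion fun r hr s hs hrs => disjoint_arcIntegers hrs (hT r hr) (hT s hs)]
  exact Finset.card_le_card (Finset.biUnion_subset.2 fun r _ => Finset.filter_subset _ _)

lemma finite_of_arcIntegers_nonempty {T : Set ℚ} (hT : ∀ r ∈ T, ε * r.den < 1)
    (hne : ∀ r ∈ T, (arcIntegers f d ε a b r).Nonempty) : T.Finite := by
  choose! m hm using hne
  refine Set.Finite.of_injOn (f := m) (t := nearIntegers f ε a b)
    (fun r hr => Finset.filter_subset _ _ (hm r hr)) (fun r hr s hs hrs => ?_)
    (Finset.finite_toSet _)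
  by_contra hne
  exact Finset.disjoint_left.1 (disjoint_arcIntegers hne (hT r hr) (hT s hs)) (hm r hr)
    (hrs ▸ hm s hs)

lemma sq_mul_div_le_card_nearIntegers_of_short_arcs {Q : ℝ}
    (h : StrongSubgradientOn f d μ (Set.Icc a b)) (hd : LipschitzOnWith ν d (Set.Icc a b))
    (hμ : 0 < μ) (hμν : μ ≤ ν) (hab : a ≤ b) (hε : 0 < ε) (hε' : ε < 1 / 2) (hQ1 : 1 ≤ Q)
    (hQ : 2 * ε * Q ≤ 1) (hνμ : 9 * (ν : ℝ) ^ 2 * Q ≤ μ * ε ^ 2)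
    (hshort : ∀ x ∈ Set.Icc (a + 3 * (b - a) / 8) (b - 3 * (b - a) / 8), ∀ r : ℚ,
      r.den ≤ Q → |d x - r| ≤ 1 / (r.den * Q) → 1 / (r.den * Q) / μ ≤ (b - a) / 4) :
    ε ^ 2 * Q * μ * (b - a) / (24 * ν) ≤ (nearIntegers f ε a b).card := by
  set s := Set.Icc (a + 3 * (b - a) / 8) (b - 3 * (b - a) / 8)
  set T : Set ℚ := {r | r.den ≤ Q ∧ ∃ x ∈ s, |d x - r| ≤ 1 / (r.den * Q)}
  have hν : (0 : ℝ) < ν := hμ.trans_le hμν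
  have hT : ∀ r ∈ T, ε * r.den < 1 := fun r hr => by
    linarith [mul_le_mul_of_nonneg_left hr.1 hε.le]
  have harc : ∀ r ∈ T, ε ^ 2 / (3 * ν * r.den) ≤ ((arcIntegers f d ε a b r).card : ℝ) := by
    rintro r ⟨hr, x, hx, hxr⟩
    exact sq_div_le_card_arcIntegers_of_abs_sub_le h hd hμ hμν hε hε' hQ hνμ hr hx hxr
      (hshort x hx r hr hxr)
  have hTfin : T.Finite := finite_of_arcIntegers_nonempty (f := f) (d := d) (a := a) (b := b) hT
    fun r hr => Finset.card_pos.1 <| by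
      exact_mod_cast (by positivity : 0 < ε ^ 2 / (3 * ν * r.den)).trans_le (harc r hr)
  have hs : s ⊆ Set.Icc a b := Set.Icc_subset_Icc (by linarith) (by linarith)
  have hcover := sub_le_sum_of_forall_rat_mem (T := hTfin.toFinset) hμ hQ1
    (fun x hx y hy => h.mul_abs_sub_le_abs_slope_sub (hs hx) (hs hy))
    fun x hx r hr hxr => hTfin.mem_toFinset.2 ⟨hr, x, hx, hxr⟩
  calc ε ^ 2 * Q * μ * (b - a) / (24 * ν)
      = ε ^ 2 * Q * μ / (6 * ν) * (b - 3 * (b - a) / 8 - (a + 3 * (b - a) / 8)) := by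
        field_simp; ring
    _ ≤ ε ^ 2 * Q * μ / (6 * ν) * ∑ r ∈ hTfin.toFinset, 2 / (r.den * Q * μ) := by gcongr
    _ = ∑ r ∈ hTfin.toFinset, ε ^ 2 / (3 * ν * r.den) := by
        rw [Finset.mul_sum]
        exact Finset.sum_congr rfl fun r _ => by field_simp; norm_num
    _ ≤ ∑ r ∈ hTfin.toFinset, ((arcIntegers f d ε a b r).card : ℝ) :=
        Finset.sum_le_sum fun r hr => harc r (hTfin.mem_toFinset.1 hr)
    _ ≤ _ := mod_cast sum_card_arcIntegers_le fun r hr => hT r (hTfin.mem_toFinset.1 hr)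

end DirichletArcs

section LongArc

variable {f d : ℝ → ℝ} {r : ℚ} {μ ε a b x : ℝ} {ν : ℝ≥0}

lemma mul_sub_sqrt_le_card_nearIntegers_of_abs_slope_sub_le {p : ℝ}
    (h : StrongSubgradientOn f d μ (Set.Icc a b)) (hd : LipschitzOnWith ν d (Set.Icc a b))
    (hμ : 0 < μ) (hε : 0 < ε) (hε' : ε < 1 / 2) (hq : 2 * ε * r.den ≤ 1) (hp : 0 ≤ p)
    (hpa : a ≤ x - 2 * p) (hpb : x + 2 * p ≤ b) (hνp : ν * p ≤ ε / r.den)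
    (hxr : |d x - r| ≤ 2 * ε / r.den) :
    ε * (p - √(4 / (r.den * μ))) ≤ (nearIntegers f ε a b).card := by
  have hx : x ∈ Set.Icc a b := ⟨by linarith, by linarith⟩
  have hmono := h.monotoneOn_slope hμ.le
  have hosc : ∀ y ∈ Set.Icc a b, |y - x| ≤ 2 * p → |d y - d x| ≤ 2 * ε / r.den := fun y hy hyx =>
    calc |d y - d x| ≤ ν * |y - x| := by simpa [Real.dist_eq] using hd.dist_le_mul y hy x hx
      _ ≤ ν * (2 * p) := by gcongr
      _ ≤ 2 * ε / r.den := by linarith [mul_div_assoc 2 ε (r.den : ℝ)]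
  obtain ⟨u, hau, hub, hu⟩ : ∃ u, a ≤ u ∧ u + 2 * p ≤ b ∧
      ∀ y ∈ Set.Icc u (u + 2 * p), |d y - r| ≤ 2 * ε / r.den := by
    simp only [abs_le] at hosc hxr ⊢
    rcases le_total (r : ℝ) (d x) with hrx | hrx
    · refine ⟨x - 2 * p, hpa, by linarith, fun y hy => ?_⟩
      have hyI : y ∈ Set.Icc a b := ⟨by linarith [hy.1], by linarith [hy.2]⟩
      have hle := hmono hyI hx (by linarith [hy.2])
      have := hosc y hyI ⟨by linarith [hy.1], by linarith [hy.2]⟩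
      exact ⟨by linarith, by linarith⟩
    · refine ⟨x, by linarith, hpb, fun y hy => ?_⟩
      have hyI : y ∈ Set.Icc a b := ⟨by linarith [hy.1], by linarith [hy.2]⟩
      have hle := hmono hx hyI hy.1
      have := hosc y hyI ⟨by linarith [hy.1], by linarith [hy.2]⟩
      exact ⟨by linarith, by linarith⟩
  calc ε * (p - √(4 / (r.den * μ))) = ε * ((u + 2 * p - u) / 2 - √(4 / (r.den * μ))) := by ring
    _ ≤ (nearIntegers f ε u (u + 2 * p)).card :=
        mul_half_sub_sqrt_le_card_nearIntegers_of_abs_slope_sub_le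
          (h.mono (Set.Icc_subset_Icc hau hub)) hμ hε hε' hq (by linarith) hu
    _ ≤ _ := mod_cast Finset.card_le_card (nearIntegers_subset hau hub)

lemma mul_div_le_card_nearIntegers_of_long_arc
    (h : StrongSubgradientOn f d μ (Set.Icc a b)) (hd : LipschitzOnWith ν d (Set.Icc a b))
    (hμ : 0 < μ) (hμν : μ ≤ ν) (hab : a ≤ b) (hε : 0 < ε) (hε' : ε < 1 / 2)
    (hlen : 144 ≤ μ * (b - a) ^ 2) (hq : 2 * ε * r.den ≤ 1)
    (hνμ : 9 * (ν : ℝ) ^ 2 * r.den ≤ μ * ε ^ 2)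
    (hx : x ∈ Set.Icc (a + 3 * (b - a) / 8) (b - 3 * (b - a) / 8))
    (hxr : |d x - r| ≤ 2 * ε / r.den) (hlong : (b - a) / 4 ≤ 2 * ε / r.den / μ) :
    ε * μ * (b - a) / (72 * ν) ≤ (nearIntegers f ε a b).card := by
  have hν : (0 : ℝ) < ν := hμ.trans_le hμν
  have hq1 : (1 : ℝ) ≤ r.den := by exact_mod_cast r.den_pos
  have hM : 0 ≤ b - a := sub_nonneg.2 hab
  set p : ℝ := min (3 * (b - a) / 16) (ε / (ν * r.den))
  have hp1 : p ≤ 3 * (b - a) / 16 := min_le_left _ _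
  have hp2 : p ≤ ε / (ν * r.den) := min_le_right _ _
  have hpM : μ * (b - a) / (8 * ν) ≤ p := by
    refine le_min ?_ ?_
    · rw [div_le_div_iff₀ (by positivity) (by norm_num)]
      nlinarith [mul_le_mul_of_nonneg_right hμν hM, mul_nonneg hν.le hM]
    · rw [le_div_iff₀ hμ] at hlong
      calc μ * (b - a) / (8 * ν) = (b - a) / 4 * μ / (2 * ν) := by ring
        _ ≤ 2 * ε / r.den / (2 * ν) := by gcongr
        _ = ε / (ν * r.den) := by field_simp
  have hsqrt : √(4 / (r.den * μ)) ≤ 8 / 9 * p := by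
    have hM6 : √(4 / (r.den * μ)) ≤ (b - a) / 6 := by
      refine (Real.sqrt_le_left (by positivity)).2 ((div_le_iff₀ (by positivity)).2 ?_)
      nlinarith [mul_le_mul_of_nonneg_left hq1 (by positivity : 0 ≤ μ * (b - a) ^ 2)]
    have hε8 := sqrt_four_div_le (zero_lt_one.trans_le hq1) hμ hν hε hνμ
    have : 0 ≤ ε / (ν * r.den) := by positivity
    rw [← div_le_iff₀' (by norm_num)]
    exact le_min (by linarith) (by linarith)
  calc ε * μ * (b - a) / (72 * ν) = ε * (μ * (b - a) / (8 * ν) / 9) := by ring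
    _ ≤ ε * (p - √(4 / (r.den * μ))) := by gcongr; linarith
    _ ≤ _ := mul_sub_sqrt_le_card_nearIntegers_of_abs_slope_sub_le h hd hμ hε hε' hq
        ((by positivity : 0 ≤ μ * (b - a) / (8 * ν)).trans hpM) (by linarith [hx.1])
        (by linarith [hx.2])
        ((mul_le_mul_of_nonneg_left hp2 hν.le).trans_eq (by field_simp)) hxr

end LongArc

section StrongConvex

variable {f d : ℝ → ℝ} {μ ε a b : ℝ} {ν : ℝ≥0}

/-- The largest order `Q` of Dirichlet approximation for which every denominator `q ≤ Q` satisfies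
both `2 * ε * q ≤ 1`, so that arcs of different slopes are disjoint, and
`9 * ν ^ 2 * q ≤ μ * ε ^ 2`, so that the loss `√(4 / (q * μ))` at the end of an arc is at most two
thirds of its length `ε / (ν * q)`. -/
noncomputable def dirichletOrder (ε μ ν : ℝ) : ℝ :=
  min (1 / (2 * ε)) (μ * ε ^ 2 / (9 * ν ^ 2))

lemma min_le_mul_dirichletOrder (hμ : 0 < μ) (hν : 0 < ν) (hab : a ≤ b) (hε : 0 < ε) :
    min (ε ^ 4 * μ ^ 2 * (b - a) / (216 * ν ^ 3)) (ε * μ * (b - a) / (72 * ν)) ≤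
      ε ^ 2 * dirichletOrder ε μ ν * μ * (b - a) / (24 * ν) := by
  rw [min_le_iff, dirichletOrder]
  rcases min_choice (1 / (2 * ε)) (μ * ε ^ 2 / (9 * (ν : ℝ) ^ 2)) with hQ | hQ
  · right
    calc ε * μ * (b - a) / (72 * ν) ≤ ε * μ * (b - a) / (48 * ν) := by
          have := sub_nonneg.2 hab
          gcongr
          norm_num
      _ = ε ^ 2 * (1 / (2 * ε)) * μ * (b - a) / (24 * ν) := by field_simp; ring
      _ = _ := by rw [hQ]
  · left
    rw [hQ]
    exact le_of_eq (by field_simp; ring)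

lemma dirichletOrder_eq_of_lt {q : ℝ} (hμ : 0 < μ) (hν : 0 < ν) (hε : 0 < ε) (hq : 1 ≤ q)
    (hνM : 36 * (ν : ℝ) ^ 2 ≤ ε ^ 2 * μ ^ 2 * (b - a))
    (hlt : (b - a) / 4 < 1 / (q * dirichletOrder ε μ ν) / μ) :
    dirichletOrder ε μ ν = 1 / (2 * ε) := by
  refine min_eq_left (le_of_not_gt fun hmin => hlt.not_ge ?_)
  rw [dirichletOrder, min_eq_right hmin.le]
  calc 1 / (q * (μ * ε ^ 2 / (9 * ν ^ 2))) / μ = 9 * ν ^ 2 / (ε ^ 2 * μ ^ 2) / q := by field_simp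
    _ ≤ 9 * ν ^ 2 / (ε ^ 2 * μ ^ 2) := div_le_self (by positivity) hq
    _ ≤ (b - a) / 4 := by
        rw [div_le_iff₀ (by positivity)]
        linarith

lemma min_le_card_nearIntegers_of_strongSubgradientOn
    (h : StrongSubgradientOn f d μ (Set.Icc a b)) (hd : LipschitzOnWith ν d (Set.Icc a b))
    (hμ : 0 < μ) (hμν : μ ≤ ν) (hab : a ≤ b) (hε : 0 < ε) (hε' : ε < 1 / 2)
    (hlen : 144 ≤ μ * (b - a) ^ 2) (hνμ : 9 * (ν : ℝ) ^ 2 ≤ μ * ε ^ 2)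
    (hνM : 36 * (ν : ℝ) ^ 2 ≤ ε ^ 2 * μ ^ 2 * (b - a)) :
    min (ε ^ 4 * μ ^ 2 * (b - a) / (216 * ν ^ 3)) (ε * μ * (b - a) / (72 * ν)) ≤
      ((nearIntegers f ε a b).card : ℝ) := by
  have hν : (0 : ℝ) < ν := hμ.trans_le hμν
  set Q := dirichletOrder ε μ ν
  have hQ1 : 1 ≤ Q := le_min ((one_le_div₀ (by positivity)).2 (by linarith))
    ((one_le_div₀ (by positivity)).2 hνμ)
  have hQε : 2 * ε * Q ≤ 1 := (le_div_iff₀' (by positivity)).1 (min_le_left _ _)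
  have hQν : 9 * (ν : ℝ) ^ 2 * Q ≤ μ * ε ^ 2 := (le_div_iff₀' (by positivity)).1 (min_le_right _ _)
  by_cases hshort : ∀ x ∈ Set.Icc (a + 3 * (b - a) / 8) (b - 3 * (b - a) / 8), ∀ r : ℚ,
      r.den ≤ Q → |d x - r| ≤ 1 / (r.den * Q) → 1 / (r.den * Q) / μ ≤ (b - a) / 4
  · exact (min_le_mul_dirichletOrder hμ hν hab hε).trans
      (sq_mul_div_le_card_nearIntegers_of_short_arcs h hd hμ hμν hab hε hε' hQ1 hQε hQν hshort)
  · push Not at hshort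
    obtain ⟨x, hx, r, hr, hxr, hlong⟩ := hshort
    have hQ : Q = 1 / (2 * ε) :=
      dirichletOrder_eq_of_lt hμ hν hε (by exact_mod_cast r.den_pos) hνM hlong
    have hrQ : 1 / (r.den * Q) = 2 * ε / r.den := by rw [hQ]; field_simp
    rw [hrQ] at hxr hlong
    exact min_le_of_right_le (mul_div_le_card_nearIntegers_of_long_arc h hd hμ hμν hab hε hε'
      hlen ((mul_le_mul_of_nonneg_left hr (by positivity)).trans hQε)
      ((mul_le_mul_of_nonneg_left hr (by positivity)).trans hQν) hx hxr hlong.le)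

end StrongConvex

section Derivative

variable {f f' f'' : ℝ → ℝ} {μ ν ε a b : ℝ}

lemma strongSubgradientOn_of_hasDerivWithinAt {s : Set ℝ} (hs : Convex ℝ s)
    (hf : ∀ x ∈ s, HasDerivWithinAt f (f' x) s x)
    (hf' : ∀ x ∈ s, HasDerivWithinAt f' (f'' x) s x) (hμ : ∀ x ∈ s, μ ≤ f'' x) :
    StrongSubgradientOn f f' μ s := by
  have hφ : ∀ x ∈ s, HasDerivWithinAt (fun y => f y - μ / 2 * y ^ 2) (f' x - μ * x) s x :=
    fun x hx =>
    ((hf x hx).fun_sub ((hasDerivAt_pow 2 x).const_mul (μ / 2)).hasDerivWithinAt).congr_deriv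
      (by ring)
  have hφ' : ∀ x ∈ s, HasDerivWithinAt (fun y => f' y - μ * y) (f'' x - μ) s x := fun x hx => by
    simpa using (hf' x hx).fun_sub ((hasDerivWithinAt_id x s).const_mul μ)
  have hconv : ConvexOn ℝ s fun y => f y - μ / 2 * y ^ 2 :=
    convexOn_of_hasDerivWithinAt2_nonneg hs (fun x hx => (hφ x hx).continuousWithinAt)
      (fun x hx => (hφ x (interior_subset hx)).mono interior_subset)
      (fun x hx => (hφ' x (interior_subset hx)).mono interior_subset)
      fun x hx => sub_nonneg.2 (hμ x (interior_subset hx))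
  intro x hx y hy
  rcases lt_trichotomy x y with hxy | rfl | hyx
  · have hslope := hconv.le_slope_of_hasDerivWithinAt hx hy hxy (hφ x hx)
    rw [slope_def_field, le_div_iff₀ (sub_pos.2 hxy)] at hslope
    linarith
  · simp
  · have hslope := hconv.slope_le_of_hasDerivWithinAt hy hx hyx (hφ x hx)
    rw [slope_def_field, div_le_iff₀ (sub_pos.2 hyx)] at hslope
    linarith

lemma min_le_card_nearIntegers_of_le_deriv2 (hab : a ≤ b)
    (hf : ∀ x ∈ Set.Icc a b, HasDerivWithinAt f (f' x) (Set.Icc a b) x)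
    (hf' : ∀ x ∈ Set.Icc a b, HasDerivWithinAt f' (f'' x) (Set.Icc a b) x)
    (hlow : ∀ x ∈ Set.Icc a b, μ ≤ f'' x) (hhigh : ∀ x ∈ Set.Icc a b, f'' x ≤ ν)
    (hlen : 144 ≤ μ * (b - a) ^ 2) (hε : 0 < ε) (hε' : ε < 1 / 2) (hνμ : 9 * ν ^ 2 ≤ μ * ε ^ 2)
    (hνM : 36 * ν ^ 2 ≤ ε ^ 2 * μ ^ 2 * (b - a)) :
    min (ε ^ 4 * μ ^ 2 * (b - a) / (216 * ν ^ 3)) (ε * μ * (b - a) / (72 * ν)) ≤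
      ((nearIntegers f ε a b).card : ℝ) := by
  have hμ : 0 < μ := pos_of_mul_pos_left (by linarith) (sq_nonneg (b - a))
  have hμν : μ ≤ ν := (hlow a ⟨le_rfl, hab⟩).trans (hhigh a ⟨le_rfl, hab⟩)
  lift ν to ℝ≥0 using hμ.le.trans hμν
  refine min_le_card_nearIntegers_of_strongSubgradientOn
    (strongSubgradientOn_of_hasDerivWithinAt (convex_Icc a b) hf hf' hlow)
    ((convex_Icc a b).lipschitzOnWith_of_nnnorm_hasDerivWithin_le hf' fun x hx => ?_)
    hμ hμν hab hε hε' hlen hνμ hνM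
  rw [← NNReal.coe_le_coe, coe_nnnorm, Real.norm_of_nonneg (hμ.le.trans (hlow x hx))]
  exact hhigh x hx

lemma min_le_card_nearIntegers_of_le_abs_deriv2 (hab : a ≤ b)
    (hf : ∀ x ∈ Set.Icc a b, HasDerivWithinAt f (f' x) (Set.Icc a b) x)
    (hf' : ∀ x ∈ Set.Icc a b, HasDerivWithinAt f' (f'' x) (Set.Icc a b) x)
    (hlow : ∀ x ∈ Set.Icc a b, μ ≤ |f'' x|) (hhigh : ∀ x ∈ Set.Icc a b, |f'' x| ≤ ν)
    (hlen : 144 ≤ μ * (b - a) ^ 2) (hε : 0 < ε) (hε' : ε < 1 / 2) (hνμ : 9 * ν ^ 2 ≤ μ * ε ^ 2)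
    (hνM : 36 * ν ^ 2 ≤ ε ^ 2 * μ ^ 2 * (b - a)) :
    min (ε ^ 4 * μ ^ 2 * (b - a) / (216 * ν ^ 3)) (ε * μ * (b - a) / (72 * ν)) ≤
      ((nearIntegers f ε a b).card : ℝ) := by
  have hμ : 0 < μ := pos_of_mul_pos_left (by linarith) (sq_nonneg (b - a))
  rcases hasDerivWithinAt_forall_lt_or_forall_gt_of_forall_ne (convex_Icc a b) hf' (m := 0)
    fun x hx => abs_pos.1 (hμ.trans_le (hlow x hx)) with hneg | hpos
  · refine (min_le_card_nearIntegers_of_le_deriv2 (f := fun x => -f x) hab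
      (fun x hx => (hf x hx).neg) (fun x hx => (hf' x hx).neg)
      (fun x hx => (hlow x hx).trans_eq (abs_of_neg (hneg x hx)))
      (fun x hx => (neg_le_abs _).trans (hhigh x hx)) hlen hε hε' hνμ hνM).trans ?_
    exact_mod_cast Finset.card_le_card nearIntegers_neg_subset
  · exact min_le_card_nearIntegers_of_le_deriv2 hab hf hf'
      (fun x hx => (hlow x hx).trans_eq (abs_of_pos (hpos x hx)))
      (fun x hx => (le_abs_self _).trans (hhigh x hx)) hlen hε hε' hνμ hνM

end Derivative

section Parameters

variable {M C Δ ε : ℝ}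

lemma huxley_epsilon_bounds (hM : 0 < M) (hC : 0 < C) (hΔ : 0 < Δ)
    (hε : max (3 * √(C ^ 3 * Δ)) (6 * C ^ 2 * √(2 / M)) ≤ ε) :
    0 < ε ∧ 9 * (C * Δ) ^ 2 ≤ Δ / C * ε ^ 2 ∧
      36 * (C * Δ) ^ 2 ≤ ε ^ 2 * (Δ / C) ^ 2 * M := by
  have hεC : 9 * (C ^ 3 * Δ) ≤ ε ^ 2 := by
    calc 9 * (C ^ 3 * Δ) = (3 * √(C ^ 3 * Δ)) ^ 2 := by
          rw [mul_pow, Real.sq_sqrt (by positivity)]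
          norm_num
      _ ≤ ε ^ 2 := pow_le_pow_left₀ (by positivity) ((le_max_left _ _).trans hε) 2
  have hεM : 36 * C ^ 4 * (2 / M) ≤ ε ^ 2 := by
    calc 36 * C ^ 4 * (2 / M) = (6 * C ^ 2 * √(2 / M)) ^ 2 := by
          rw [mul_pow, Real.sq_sqrt (by positivity)]
          ring
      _ ≤ ε ^ 2 := pow_le_pow_left₀ (by positivity) ((le_max_right _ _).trans hε) 2
  refine ⟨(by positivity : 0 < 3 * √(C ^ 3 * Δ)).trans_le ((le_max_left _ _).trans hε), ?_, ?_⟩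
  · calc 9 * (C * Δ) ^ 2 = Δ / C * (9 * (C ^ 3 * Δ)) := by field_simp
      _ ≤ Δ / C * ε ^ 2 := by gcongr
  · calc 36 * (C * Δ) ^ 2 ≤ 72 * (C * Δ) ^ 2 := by gcongr; norm_num
      _ = 36 * C ^ 4 * (2 / M) * (Δ / C) ^ 2 * M := by field_simp; norm_num
      _ ≤ ε ^ 2 * (Δ / C) ^ 2 * M := by gcongr

lemma huxley_bound_le (hM : 0 ≤ M) (hC : 1 ≤ C) (hΔ : 0 < Δ) (hε : 0 ≤ ε) :
    min (ε ^ 4 * M / (2 ^ 4 * 3 ^ 4 * C ^ 7 * Δ)) (ε * M / (2 ^ 7 * 3 ^ 2 * C ^ 4)) ≤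
      min (ε ^ 4 * (Δ / C) ^ 2 * M / (216 * (C * Δ) ^ 3)) (ε * (Δ / C) * M / (72 * (C * Δ))) := by
  have : 0 < C := zero_lt_one.trans_le hC
  refine min_le_min ?_ ?_
  · calc ε ^ 4 * M / (2 ^ 4 * 3 ^ 4 * C ^ 7 * Δ) ≤ ε ^ 4 * M / (216 * C ^ 5 * Δ) := by
          gcongr <;> norm_num
      _ = _ := by field_simp
  · calc ε * M / (2 ^ 7 * 3 ^ 2 * C ^ 4) ≤ ε * M / (72 * C ^ 2) := by
          gcongr <;> norm_num
      _ = _ := by field_simp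

end Parameters

lemma hasDerivWithinAt_derivWithin_iteratedDerivWithin_two {f : ℝ → ℝ} {s : Set ℝ} {x : ℝ}
    (hf : ContDiffOn ℝ 2 f s) (hs : UniqueDiffOn ℝ s) (hx : x ∈ s) :
    HasDerivWithinAt (derivWithin f s) (iteratedDerivWithin 2 f s x) s x := by
  rw [iteratedDerivWithin_succ, iteratedDerivWithin_one]
  exact ((hf.derivWithin hs (by norm_num)).differentiableOn one_ne_zero x hx).hasDerivWithinAt

lemma exists_injective_fin_of_le_card_nearIntegers {f : ℝ → ℝ} {ε a b B : ℝ}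
    (hB : B ≤ (nearIntegers f ε a b).card) :
    ∃ (R : ℕ) (m : Fin R → ℤ), Function.Injective m ∧ (∀ r, (m r : ℝ) ∈ Set.Icc a b) ∧
      (∀ r, |f (m r) - round (f (m r))| ≤ ε) ∧ B ≤ R :=
  have hmem := fun r => mem_nearIntegers.1 (Finset.orderEmbOfFin_mem (nearIntegers f ε a b) rfl r)
  ⟨_, (nearIntegers f ε a b).orderEmbOfFin rfl, RelEmbedding.injective _, fun r => (hmem r).1,
    fun r => (hmem r).2, hB⟩

theorem huxley_integer_points_near_curve_general {f f' f'' : ℝ → ℝ} {a M C Δ ε : ℝ}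
    (hM : 0 < M) (hC : 1 ≤ C)
    (hf : ∀ x ∈ Set.Icc a (a + M), HasDerivWithinAt f (f' x) (Set.Icc a (a + M)) x)
    (hf' : ∀ x ∈ Set.Icc a (a + M), HasDerivWithinAt f' (f'' x) (Set.Icc a (a + M)) x)
    (hlen : 144 / M ^ 2 ≤ Δ / C) (hlow : ∀ x ∈ Set.Icc a (a + M), Δ / C ≤ |f'' x|)
    (hhigh : ∀ x ∈ Set.Icc a (a + M), |f'' x| ≤ C * Δ)
    (hε : max (3 * √(C ^ 3 * Δ)) (6 * C ^ 2 * √(2 / M)) ≤ ε) (hε' : ε < 1 / 2) :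
    ∃ (R : ℕ) (m : Fin R → ℤ), Function.Injective m ∧
      (∀ r, (m r : ℝ) ∈ Set.Icc a (a + M)) ∧ (∀ r, |f (m r) - round (f (m r))| ≤ ε) ∧
      min (ε ^ 4 * M / (2 ^ 4 * 3 ^ 4 * C ^ 7 * Δ)) (ε * M / (2 ^ 7 * 3 ^ 2 * C ^ 4))
        ≤ (R : ℝ) := by
  have hC0 : 0 < C := zero_lt_one.trans_le hC
  have hΔ : 0 < Δ :=
    (div_pos_iff_of_pos_right hC0).1 ((by positivity : 0 < 144 / M ^ 2).trans_le hlen)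
  obtain ⟨hε0, hνμ, hνM⟩ := huxley_epsilon_bounds hM hC0 hΔ hε
  rw [div_le_iff₀ (by positivity)] at hlen
  refine exists_injective_fin_of_le_card_nearIntegers
    ((huxley_bound_le hM.le hC hΔ hε0.le).trans ?_)
  simpa only [add_sub_cancel_left] using min_le_card_nearIntegers_of_le_abs_deriv2
    (by linarith : a ≤ a + M) hf hf' hlow hhigh (by rwa [add_sub_cancel_left]) hε0 hε' hνμ
    (by rwa [add_sub_cancel_left])

/-- **Huxley's theorem on integer points close to a curve.**
Let `M ≥ 12` be a positive integer and `I = [A, A + M]` a closed interval with integer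
endpoints. Let `f` be twice continuously differentiable on `I` with
`144/M^2 ≤ Δ/C ≤ |f''(x)| ≤ C*Δ ≤ 1` on `I`, where `C ≥ 1` and `Δ ≤ 1`. Let
`max (3√(C^3*Δ)) (6*C^2*√(2/M)) ≤ ε ≤ 1/4`. Then there are `R` distinct integers
`m_1, ..., m_R` in `I` with `‖f(m_r)‖ ≤ ε` (distance to the nearest integer) and
`R ≥ min (ε^4*M/(2^4*3^4*C^7*Δ)) (ε*M/(2^7*3^2*C^4))`. -/
theorem huxley_integer_points_near_curve
    (M : ℕ) (hM : 12 ≤ M) (A : ℤ) (f : ℝ → ℝ) (C Δ ε : ℝ)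
    (hC : 1 ≤ C) (hΔ : Δ ≤ 1)
    (hf : ContDiffOn ℝ 2 f (Set.Icc (A : ℝ) ((A : ℝ) + M)))
    (h144 : 144 / (M : ℝ) ^ 2 ≤ Δ / C)
    (hlow : ∀ x ∈ Set.Icc (A : ℝ) ((A : ℝ) + M),
      Δ / C ≤ |iteratedDerivWithin 2 f (Set.Icc (A : ℝ) ((A : ℝ) + M)) x|)
    (hhigh : ∀ x ∈ Set.Icc (A : ℝ) ((A : ℝ) + M),
      |iteratedDerivWithin 2 f (Set.Icc (A : ℝ) ((A : ℝ) + M)) x| ≤ C * Δ)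
    (hCΔ : C * Δ ≤ 1)
    (hε1 : max (3 * Real.sqrt (C ^ 3 * Δ)) (6 * C ^ 2 * Real.sqrt (2 / M)) ≤ ε)
    (hε2 : ε ≤ 1 / 4) :
    ∃ (R : ℕ) (m : Fin R → ℤ), Function.Injective m ∧
      (∀ r, (m r : ℝ) ∈ Set.Icc (A : ℝ) ((A : ℝ) + M)) ∧
      (∀ r, |f (m r) - round (f (m r))| ≤ ε) ∧
      min (ε ^ 4 * M / (2 ^ 4 * 3 ^ 4 * C ^ 7 * Δ)) (ε * M / (2 ^ 7 * 3 ^ 2 * C ^ 4))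
        ≤ (R : ℝ) := by
  have hM0 : (0 : ℝ) < M := by exact_mod_cast (by norm_num : 0 < 12).trans_le hM
  exact huxley_integer_points_near_curve_general hM0 hC
    (fun x hx => (hf.differentiableOn two_ne_zero x hx).hasDerivWithinAt)
    (fun x hx => hasDerivWithinAt_derivWithin_iteratedDerivWithin_two hf
      (uniqueDiffOn_Icc (by linarith)) hx)
    h144 hlow hhigh hε1 (by linarith)
end
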